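/- arXiv:math/0209011 — 3 statements merged into one kernel-verified Lean document; each statement's English description precedes it below -/
import Mathlib

section
/- Given integers b_1 ≤ … ≤ b_t and a_0 ≤ … ≤ a_{t+c−2} with a_{i−1} − b_i > 0 for all i = 1,…,t, there exists a t × (t+c−1) homogeneous matrix with entries in k[x_0,…,x_{n+c}] of degrees a_j − b_i whose maximal minors generate an ideal of codimension exactly c (i.e., the associated standard determinantal scheme of codimension c exists). In particular the locus W_s(b;a) of standard determinantal schemes with this degree matrix is nonempty if and only if a_{i−1} − b_i > 0 for i = 1,…,t. -/
open MvPolynomial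

/-!
The core is the Eagon–Northcott bound: a prime `P` minimal over the maximal minors of a `p × q`
matrix `M` has height at most `q + 1 - p`. If some minor of size `p - 1` avoids `P`, then `P` is
already minimal over the `q + 1 - p` maximal minors bordering it, and Krull's height theorem
applies. In general, choose a row vector `y` with `y ᵥ* M ≡ 0` and `y i ≢ 0` modulo `P`, and pass
to the pencil `M + X • E`, where `y ᵥ* E = 0` and `E` has a minor of size `p - 1` equal to a power
of `y i`. The maximal minors of the pencil lie in `P[X]`, and `P[X]` is minimal over them because
`X = 0` gives back `M`; moreover a minor of size `p - 1` avoids `P[X]`.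

If `a_{i-1} ≤ b_i`, then a homogeneous matrix of the given degrees vanishes on the rows from `i`
on and the first `i` columns. Linear dependences between the rows of the complementary block `B`
of `t - i + 1` rows and `t + c - 1 - i` columns extend by zero to the whole matrix, so its maximal
minors vanish on the locus of the maximal minors of `B`, which has codimension at most `c - 1`.
Conversely, the band matrix with powers of `x_s` on its `s`-th diagonal, `s < c`, has an ideal of
maximal minors whose radical is `(x_0, …, x_{c-1})`.
-/

section MaximalMinors

open scoped Matrix

variable {A B ι κ : Type*} [CommRing A] [CommRing B] [Fintype ι] [DecidableEq ι]

/-- The ideal of maximal minors of a matrix with rows indexed by `ι`: a minor is given by an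
injective choice `g` of columns, so each set of columns occurs in every order, up to sign. -/
def maximalMinors (M : Matrix ι κ A) : Ideal A :=
  Ideal.span {d | ∃ g : ι → κ, Function.Injective g ∧ d = (M.submatrix id g).det}

theorem det_submatrix_mem_maximalMinors (M : Matrix ι κ A) (g : ι → κ) :
    (M.submatrix id g).det ∈ maximalMinors M := by
  by_cases hg : Function.Injective g
  · exact Ideal.subset_span ⟨g, hg, rfl⟩
  · obtain ⟨i, j, hgij, hij⟩ := Function.not_injective_iff.1 hg
    rw [Matrix.det_zero_of_column_eq hij fun r => by simp only [Matrix.submatrix_apply, hgij]]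
    exact zero_mem _

theorem maximalMinors_le_iff {M : Matrix ι κ A} {I : Ideal A} :
    maximalMinors M ≤ I ↔ ∀ g : ι → κ, (M.submatrix id g).det ∈ I := by
  refine ⟨fun h g => h (det_submatrix_mem_maximalMinors M g), fun h => Ideal.span_le.2 ?_⟩
  rintro _ ⟨g, -, rfl⟩
  exact h g

theorem maximalMinors_le_of_forall_mem [Nonempty ι] {M : Matrix ι κ A} {I : Ideal A}
    (h : ∀ i j, M i j ∈ I) : maximalMinors M ≤ I := by
  refine maximalMinors_le_iff.2 fun g => Ideal.Quotient.eq_zero_iff_mem.1 ?_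
  have hzero : (M.submatrix id g).map (Ideal.Quotient.mk I) = 0 :=
    Matrix.ext fun i j => Ideal.Quotient.eq_zero_iff_mem.2 (h i (g j))
  rw [RingHom.map_det, RingHom.mapMatrix_apply, hzero, Matrix.det_zero]

theorem map_maximalMinors (f : A →+* B) (M : Matrix ι κ A) :
    (maximalMinors M).map f = maximalMinors (M.map f) := by
  refine le_antisymm (Ideal.map_le_iff_le_comap.2 (maximalMinors_le_iff.2 fun g => ?_))
    (maximalMinors_le_iff.2 fun g => ?_)
  · rw [Ideal.mem_comap, RingHom.map_det]
    exact det_submatrix_mem_maximalMinors (M.map f) g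
  · have hdet : f (M.submatrix id g).det = ((M.map f).submatrix id g).det := RingHom.map_det f _
    exact hdet ▸ Ideal.mem_map_of_mem f (det_submatrix_mem_maximalMinors M g)

theorem maximalMinors_eq_bot_of_card_lt [Fintype κ] (M : Matrix ι κ A)
    (h : Fintype.card κ < Fintype.card ι) : maximalMinors M = ⊥ := by
  refine Ideal.span_eq_bot.2 ?_
  rintro _ ⟨g, hg, -⟩
  exact absurd (Fintype.card_le_of_injective g hg) h.not_ge

theorem det_mul_mem_maximalMinors [Fintype κ] (M : Matrix ι κ A) (N : Matrix κ ι A) :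
    (M * N).det ∈ maximalMinors M := by
  classical
  have hcol : (M * N)ᵀ = fun i => ∑ j, N j i • M.col j := by
    ext i r
    simp [Matrix.mul_apply, Matrix.col_apply, mul_comm]
  rw [← Matrix.det_transpose, hcol]
  change Matrix.detRowAlternating.toMultilinearMap _ ∈ _
  rw [MultilinearMap.map_sum]
  refine Ideal.sum_mem _ fun g _ => ?_
  rw [MultilinearMap.map_smul_univ]
  refine Submodule.smul_mem _ _ ?_
  change Matrix.det (M.submatrix id g)ᵀ ∈ _
  rw [Matrix.det_transpose]
  exact det_submatrix_mem_maximalMinors M g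

theorem exists_vecMul_eq_zero_of_maximalMinors_eq_bot [IsDomain A] [Finite κ] {M : Matrix ι κ A}
    (h : maximalMinors M = ⊥) : ∃ y : ι → A, y ≠ 0 ∧ y ᵥ* M = 0 := by
  classical
  have := Fintype.ofFinite κ
  by_contra! hker
  let f := algebraMap A (FractionRing A)
  have hli : LinearIndependent A M.row := by
    rw [← Matrix.vecMul_injective_iff]
    refine (injective_iff_map_eq_zero M.vecMulLinear).2 fun y hy => ?_
    by_contra hy0
    exact hker y hy0 hy
  have hliK : LinearIndependent (FractionRing A) (M.map f).row := by
    rw [← LinearIndependent.iff_fractionRing (R := A)]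
    exact hli.map' ((Algebra.linearMap A (FractionRing A)).compLeft κ)
      (LinearMap.ker_eq_bot.2 (IsFractionRing.injective A (FractionRing A)).comp_left)
  obtain ⟨N, hN⟩ : ∃ N : Matrix κ ι (FractionRing A), M.map f * N = 1 := by
    rw [← Matrix.mulVec_surjective_iff_exists_right_inverse]
    rw [← Matrix.coe_mulVecLin, ← LinearMap.range_eq_top]
    refine Submodule.eq_top_of_finrank_eq ?_
    rw [Module.finrank_fintype_fun_eq_card]
    exact hliK.rank_matrix
  have hone := det_mul_mem_maximalMinors (M.map f) N
  rw [hN, Matrix.det_one, ← map_maximalMinors, h, Ideal.map_bot] at hone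
  exact one_ne_zero (Ideal.mem_bot.1 hone)

theorem maximalMinors_le_of_vecMul_mem {P : Ideal A} [P.IsPrime] {M : Matrix ι κ A} {y : ι → A}
    {i : ι} (hi : y i ∉ P) (hy : ∀ j, (y ᵥ* M) j ∈ P) : maximalMinors M ≤ P := by
  refine maximalMinors_le_iff.2 fun g => ?_
  have hdet : (M.submatrix id g).det * y i ∈ P := by
    have h := congr_fun (Matrix.vecMul_vecMul y (M.submatrix id g) (M.submatrix id g).adjugate) i
    rw [Matrix.mul_adjugate, Matrix.vecMul_smul, Matrix.vecMul_one] at h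
    refine (show _ = (M.submatrix id g).det * y i from h) ▸ ?_
    exact Ideal.sum_mem _ fun j _ => P.mul_mem_right _ (hy (g j))
  exact (Ideal.IsPrime.mem_or_mem ‹_› hdet).resolve_right hi

theorem maximalMinors_le_iff_exists_vecMul_mem [Finite κ] {P : Ideal A} [P.IsPrime]
    {M : Matrix ι κ A} :
    maximalMinors M ≤ P ↔ ∃ y : ι → A, (∃ i, y i ∉ P) ∧ ∀ j, (y ᵥ* M) j ∈ P := by
  refine ⟨fun h => ?_, fun ⟨y, ⟨_, hi⟩, hy⟩ => maximalMinors_le_of_vecMul_mem hi hy⟩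
  let f := Ideal.Quotient.mk P
  have hbot : maximalMinors (M.map f) = ⊥ := by
    rw [← map_maximalMinors, Ideal.map_eq_bot_iff_le_ker, Ideal.mk_ker]
    exact h
  obtain ⟨z, hz, hzM⟩ := exists_vecMul_eq_zero_of_maximalMinors_eq_bot hbot
  obtain ⟨y, rfl⟩ := Ideal.Quotient.mk_surjective.comp_left z
  obtain ⟨i, hi⟩ := Function.ne_iff.1 hz
  refine ⟨y, ⟨i, fun hy => hi (Ideal.Quotient.eq_zero_iff_mem.2 hy)⟩, fun j => ?_⟩
  rw [← Ideal.Quotient.eq_zero_iff_mem]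
  exact (RingHom.map_vecMul f M y j).trans (congr_fun hzM j)

theorem vecMul_adjugate_apply (M : Matrix ι κ A) (h : ι → κ) (i : ι) (j : κ) :
    ((M.submatrix id h).adjugate i ᵥ* M) j = (M.submatrix id (Function.update h i j)).det := by
  have hcramer :
      ((M.submatrix id h).adjugate i ᵥ* M) j = (M.submatrix id h).cramer (M.col j) i := by
    rw [Matrix.cramer_eq_adjugate_mulVec]
    rfl
  rw [hcramer, Matrix.cramer_apply]
  congr 1
  ext r s
  by_cases hs : s = i <;> simp [hs]

-- The row `i` of the adjugate is a syzygy modulo `P`: pairing it with a column of `M` gives a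
-- bordered minor, or a determinant with a repeated column.
theorem maximalMinors_le_of_bordered_minors_mem {P : Ideal A} [P.IsPrime] {M : Matrix ι κ A}
    {h : ι → κ} {i : ι} (hpivot : (M.submatrix id h).adjugate i i ∉ P)
    (hP : ∀ j, j ∉ h '' {i}ᶜ → (M.submatrix id (Function.update h i j)).det ∈ P) :
    maximalMinors M ≤ P := by
  refine maximalMinors_le_of_vecMul_mem hpivot fun j => ?_
  rw [vecMul_adjugate_apply]
  by_cases hj : j ∈ h '' {i}ᶜ
  · obtain ⟨r, hr, rfl⟩ := hj
    rw [Matrix.det_zero_of_column_eq hr fun s => by simp [Function.update_of_ne hr]]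
    exact zero_mem P
  · exact hP j hj

theorem height_le_of_adjugate_notMem [IsNoetherianRing A] [Fintype κ] {P : Ideal A}
    {M : Matrix ι κ A} (hP : P ∈ (maximalMinors M).minimalPrimes) (h : ι ↪ κ) {i : ι}
    (hpivot : (M.submatrix id h).adjugate i i ∉ P) :
    P.height ≤ (Fintype.card κ + 1 - Fintype.card ι : ℕ) := by
  classical
  let U : Finset κ := (({i}ᶜ : Finset ι).map h)ᶜ
  let F : Finset A := U.image fun j => (M.submatrix id (Function.update h i j)).det
  have hcard : F.card ≤ Fintype.card κ + 1 - Fintype.card ι := by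
    have hU : U.card = Fintype.card κ - (Fintype.card ι - 1) := by
      rw [Finset.card_compl, Finset.card_map, Finset.card_compl, Finset.card_singleton]
    have hpos := Fintype.card_pos_iff.2 ⟨i⟩
    have := Finset.card_image_le (s := U)
      (f := fun j => (M.submatrix id (Function.update h i j)).det)
    change F.card ≤ U.card at this
    omega
  have hFM : Ideal.span (F : Set A) ≤ maximalMinors M := by
    rw [Ideal.span_le]
    intro d hd
    obtain ⟨j, -, rfl⟩ := Finset.mem_image.1 hd
    exact det_submatrix_mem_maximalMinors M _
  have hPF : P ∈ (Ideal.span (F : Set A)).minimalPrimes := by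
    refine ⟨⟨hP.1.1, hFM.trans hP.1.2⟩, fun Q ⟨hQ, hFQ⟩ hQP => hP.2 ⟨hQ, ?_⟩ hQP⟩
    refine maximalMinors_le_of_bordered_minors_mem (fun hd => hpivot (hQP hd)) fun j hj => ?_
    refine hFQ (Ideal.subset_span (Finset.mem_image_of_mem _ ?_))
    simpa [U] using hj
  exact (Ideal.height_le_card_of_mem_minimalPrimes_span_finset hPF).trans (mod_cast hcard)

end MaximalMinors

section PolynomialExtension

open scoped Polynomial

variable {A : Type*} [CommRing A]

theorem height_le_height_map_C [IsNoetherianRing A] (P : Ideal A) [P.IsPrime] :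
    P.height ≤ (P.map (Polynomial.C : A →+* A[X])).height := by
  have hover : (P.map (Polynomial.C : A →+* A[X])).LiesOver P := ⟨by
    ext a
    simp [Ideal.under, Ideal.mem_map_C_iff, Polynomial.coeff_C, apply_ite]⟩
  rw [Ideal.height_eq_height_add_of_liesOver_of_hasGoingDown P (P.map Polynomial.C)]
  exact le_self_add

-- The prime `P[X] + (X)` is minimal over `J + (X)`. A prime strictly between `J` and `P[X]` would
-- give it height at least two over that prime, contradicting Krull's principal ideal theorem.
theorem map_C_mem_minimalPrimes [IsNoetherianRing A] {P : Ideal A} [P.IsPrime] {J : Ideal A[X]}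
    (hJ : J ≤ P.map Polynomial.C) (hP : P ∈ (J.map (Polynomial.evalRingHom 0)).minimalPrimes) :
    P.map Polynomial.C ∈ J.minimalPrimes := by
  have hsurj : Function.Surjective (Polynomial.evalRingHom (0 : A)) :=
    fun a => ⟨Polynomial.C a, Polynomial.eval_C⟩
  have hlt : P.map Polynomial.C < P.comap (Polynomial.evalRingHom 0) := by
    refine lt_of_le_of_ne (Ideal.map_le_iff_le_comap.2 fun a ha => by simpa using ha) fun h => ?_
    have hX : (Polynomial.X : A[X]) ∈ P.map Polynomial.C := h ▸ by simp
    have hone := Ideal.mem_map_C_iff.1 hX 1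
    rw [Polynomial.coeff_X_one] at hone
    exact Ideal.IsPrime.one_notMem ‹_› hone
  have hcomap : (J.map (Polynomial.evalRingHom 0)).comap (Polynomial.evalRingHom 0) =
      Ideal.span (insert Polynomial.X (J : Set A[X])) := by
    rw [Ideal.comap_map_of_surjective' _ hsurj, Polynomial.ker_evalRingHom, Polynomial.C_0,
      sub_zero, Ideal.span_insert, Ideal.span_eq, sup_comm]
  have hmin : P.comap (Polynomial.evalRingHom 0) ∈
      (Ideal.span (insert Polynomial.X (J : Set A[X]))).minimalPrimes := by
    rw [← hcomap, Ideal.comap_minimalPrimes_eq_of_surjective hsurj]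
    exact ⟨P, hP, rfl⟩
  simpa using Ideal.mem_minimalPrimes_span_of_mem_minimalPrimes_span_insert hlt _ _ hmin _ hJ
    fun f hf => Ideal.le_radical (Ideal.subset_span (Set.mem_insert_of_mem _ hf))

end PolynomialExtension

section CorankOneDeformation

open scoped Matrix Polynomial

variable {A ι κ : Type*} [CommRing A] [Fintype ι] [DecidableEq ι]

/-- The square matrix `y i • 1 - eᵢ yᵀ`. It is annihilated by `y` on the left and has corank one
where `y i` is invertible. -/
def corankOneMatrix (y : ι → A) (i : ι) : Matrix ι ι A :=
  y i • 1 - Matrix.vecMulVec (Pi.single i 1) y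

theorem vecMul_corankOneMatrix (y : ι → A) (i : ι) : y ᵥ* corankOneMatrix y i = 0 := by
  rw [corankOneMatrix, Matrix.vecMul_sub, Matrix.vecMul_smul, Matrix.vecMul_one,
    Matrix.vecMul_vecMulVec, dotProduct_single_one]
  simp

theorem adjugate_corankOneMatrix_notMem {P : Ideal A} [P.IsPrime] {y : ι → A} {i : ι}
    (hi : y i ∉ P) : (corankOneMatrix y i).adjugate i i ∉ P := by
  have hdiag : (corankOneMatrix y i).updateRow i (Pi.single i 1) =
      Matrix.diagonal (Function.update (fun _ => y i) i 1) := by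
    ext r s
    by_cases hr : r = i
    · subst hr
      by_cases hs : r = s
      · simp [hs]
      · simp [hs, Ne.symm hs]
    · simp [corankOneMatrix, hr, Matrix.vecMulVec_apply, Matrix.one_apply, Matrix.diagonal_apply]
  rw [Matrix.adjugate_apply, hdiag, Matrix.det_diagonal]
  intro hprod
  obtain ⟨r, -, hr⟩ := Ideal.IsPrime.prod_mem_iff.1 hprod
  by_cases hri : r = i
  · subst hri
    rw [Function.update_self] at hr
    exact Ideal.IsPrime.one_notMem ‹_› hr
  · rw [Function.update_of_ne hri] at hr
    exact hi hr

theorem adjugate_X_smul_add_notMem_map_C {P : Ideal A} {E N : Matrix ι ι A} {i : ι}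
    (hE : E.adjugate i i ∉ P) :
    ((Polynomial.X : A[X]) • E.map Polynomial.C + N.map Polynomial.C).adjugate i i ∉
      P.map Polynomial.C := by
  intro hadj
  have hrow : Polynomial.X *
      ((Polynomial.X : A[X]) • E.map Polynomial.C + N.map Polynomial.C).adjugate i i =
      ((Polynomial.X : A[X]) • (E.updateRow i (Pi.single i 1)).map Polynomial.C +
        (N.updateRow i 0).map Polynomial.C).det := by
    rw [Matrix.adjugate_apply, ← Matrix.det_updateRow_smul]
    congr 1
    ext1 r s
    by_cases hr : r = i
    · subst hr
      by_cases hs : s = r <;> simp [hs]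
    · simp [hr]
  have hcoeff := Ideal.mem_map_C_iff.1 (Ideal.mul_mem_left _ Polynomial.X hadj) (Fintype.card ι)
  rw [hrow, Polynomial.coeff_det_X_add_C_card, ← Matrix.adjugate_apply] at hcoeff
  exact hE hcoeff

/-- The pencil `M + X • E`, where `E` is `corankOneMatrix y i` in the columns `h` and zero in the
others. A syzygy `y` of the rows of `M` modulo a prime ideal `P` remains one for the pencil, and if
`y i ∉ P` the columns `h` of the pencil have corank exactly one modulo `P[X]`. -/
noncomputable def corankOneDeformation [DecidableEq κ] (M : Matrix ι κ A) (h : ι ↪ κ) (y : ι → A)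
    (i : ι) : Matrix ι κ A[X] :=
  (Polynomial.X : A[X]) •
    (corankOneMatrix y i * (1 : Matrix κ κ A).submatrix h id).map Polynomial.C + M.map Polynomial.C

variable [DecidableEq κ] (M : Matrix ι κ A) (h : ι ↪ κ) (y : ι → A) (i : ι)

theorem map_evalRingHom_zero_corankOneDeformation :
    (corankOneDeformation M h y i).map (Polynomial.evalRingHom 0) = M := by
  ext r s
  simp [corankOneDeformation]

variable {M y i} {P : Ideal A} [P.IsPrime]

theorem maximalMinors_corankOneDeformation_le (hi : y i ∉ P) (hy : ∀ j, (y ᵥ* M) j ∈ P) :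
    maximalMinors (corankOneDeformation M h y i) ≤ P.map Polynomial.C := by
  refine maximalMinors_le_of_vecMul_mem (y := Polynomial.C ∘ y) (i := i) ?_ fun j => ?_
  · exact fun hC => hi (by simpa using Ideal.mem_map_C_iff.1 hC 0)
  · have hE : y ᵥ* (corankOneMatrix y i * (1 : Matrix κ κ A).submatrix h id) = 0 := by
      rw [← Matrix.vecMul_vecMul, vecMul_corankOneMatrix, Matrix.zero_vecMul]
    have hvec : ((Polynomial.C ∘ y) ᵥ* corankOneDeformation M h y i) j =
        Polynomial.C ((y ᵥ* M) j) := by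
      rw [corankOneDeformation, Matrix.vecMul_add, Matrix.vecMul_smul, Pi.add_apply, Pi.smul_apply,
        ← RingHom.map_vecMul, ← RingHom.map_vecMul, hE, Pi.zero_apply, map_zero, smul_zero,
        zero_add]
    exact hvec ▸ Ideal.mem_map_of_mem _ (hy j)

theorem adjugate_corankOneDeformation_notMem (hi : y i ∉ P) :
    ((corankOneDeformation M h y i).submatrix id h).adjugate i i ∉ P.map Polynomial.C := by
  have hsub : (corankOneDeformation M h y i).submatrix id h =
      (Polynomial.X : A[X]) • (corankOneMatrix y i).map Polynomial.C +
        (M.submatrix id h).map Polynomial.C := by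
    have hE : (corankOneMatrix y i * (1 : Matrix κ κ A).submatrix h id).submatrix id h =
        corankOneMatrix y i := by
      rw [Matrix.submatrix_mul _ _ id id h Function.bijective_id, Matrix.submatrix_id_id,
        Matrix.submatrix_submatrix, Function.comp_id, Function.id_comp,
        Matrix.submatrix_one_embedding, Matrix.mul_one]
    rw [corankOneDeformation, Matrix.submatrix_add, Matrix.submatrix_smul]
    simp only [Pi.add_apply, Pi.smul_apply, Matrix.submatrix_map, hE]
  rw [hsub]
  exact adjugate_X_smul_add_notMem_map_C (adjugate_corankOneMatrix_notMem hi)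

end CorankOneDeformation

theorem height_le_of_mem_minimalPrimes_maximalMinors {A ι κ : Type*} [CommRing A]
    [IsNoetherianRing A] [Fintype ι] [DecidableEq ι] [Fintype κ] {M : Matrix ι κ A} {P : Ideal A}
    (hP : P ∈ (maximalMinors M).minimalPrimes) :
    P.height ≤ (Fintype.card κ + 1 - Fintype.card ι : ℕ) := by
  classical
  have hprime : P.IsPrime := hP.1.1
  rcases lt_or_ge (Fintype.card κ) (Fintype.card ι) with hlt | hle
  · rw [maximalMinors_eq_bot_of_card_lt M hlt] at hP
    exact (Ideal.height_eq_zero_iff.2 hP).le.trans zero_le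
  · obtain ⟨h⟩ := Function.Embedding.nonempty_of_card_le hle
    obtain ⟨y, ⟨i, hi⟩, hy⟩ := maximalMinors_le_iff_exists_vecMul_mem.1 hP.1.2
    refine (height_le_height_map_C P).trans (height_le_of_adjugate_notMem
      (map_C_mem_minimalPrimes (maximalMinors_corankOneDeformation_le h hi hy) ?_) h
      (adjugate_corankOneDeformation_notMem h hi))
    rwa [map_maximalMinors, map_evalRingHom_zero_corankOneDeformation]

section Height

variable {A : Type*} [CommRing A]

theorem ringKrullDim_quotient_le_of_le_radical {I J : Ideal A}
    (h : I ≤ J.radical) : ringKrullDim (A ⧸ J) ≤ ringKrullDim (A ⧸ I) := by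
  have hsub : PrimeSpectrum.zeroLocus (J : Set A) ⊆ PrimeSpectrum.zeroLocus (I : Set A) :=
    (PrimeSpectrum.zeroLocus_subset_zeroLocus_iff J I).2 h
  rw [ringKrullDim_quotient, ringKrullDim_quotient]
  exact Order.krullDim_le_of_strictMono (Set.inclusion hsub) fun _ _ hlt => hlt

variable [IsNoetherianRing A]

theorem exists_finset_card_eq_height_map_mk {I P : Ideal A} [P.IsPrime] (hIP : I ≤ P) :
    ∃ F : Finset A, F.card = (P.map (Ideal.Quotient.mk I)).height ∧
      P ∈ (I ⊔ Ideal.span F).minimalPrimes := by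
  classical
  have hprime := Ideal.isPrime_map_quotientMk_of_isPrime hIP
  obtain ⟨F', hF', hcard⟩ :=
    Ideal.exists_finset_card_eq_height_of_isNoetherianRing (P.map (Ideal.Quotient.mk I))
  have hlift : Set.SurjOn (Ideal.Quotient.mk I) P F' := fun x hx =>
    (Ideal.mem_map_iff_of_surjective _ Ideal.Quotient.mk_surjective).1
      (hF'.1.2 (Ideal.subset_span hx))
  obtain ⟨F, -, hinj, rfl⟩ := F'.exists_subset_injOn_image_eq_of_surjOn (P : Set A) hlift
  refine ⟨F, by rw [← hcard, Finset.card_image_of_injOn hinj],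
    Ideal.mem_minimalPrimes_sup hIP ?_⟩
  rwa [Ideal.map_span, ← Finset.coe_image]

variable {ι κ : Type*} [Fintype ι] [DecidableEq ι] [Fintype κ] {M : Matrix ι κ A} {P : Ideal A}

theorem height_le_card_add_of_mem_minimalPrimes_maximalMinors_sup {F : Finset A}
    (hP : P ∈ (maximalMinors M ⊔ Ideal.span F).minimalPrimes) :
    P.height ≤ (F.card + (Fintype.card κ + 1 - Fintype.card ι) : ℕ) := by
  have hprime : P.IsPrime := hP.1.1
  let f := Ideal.Quotient.mk (Ideal.span (F : Set A))
  have hmin : P.map f ∈ (maximalMinors (M.map f)).minimalPrimes := by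
    rw [← map_maximalMinors, Ideal.minimalPrimes_map_of_surjective Ideal.Quotient.mk_surjective,
      Ideal.mk_ker]
    exact ⟨P, hP, rfl⟩
  have hFP : (F : Set A) ⊆ P := Ideal.span_le.1 (le_sup_right.trans hP.1.2)
  calc P.height ≤ (P.map f).height + (F : Set A).encard :=
        Ideal.height_le_height_add_encard_of_subset _ hFP
    _ ≤ (Fintype.card κ + 1 - Fintype.card ι : ℕ) + F.card := by
        rw [Set.encard_coe_eq_coe_finsetCard]
        gcongr
        exact height_le_of_mem_minimalPrimes_maximalMinors hmin
    _ = (F.card + (Fintype.card κ + 1 - Fintype.card ι) : ℕ) := by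
        rw [add_comm, Nat.cast_add]

theorem height_le_height_map_mk_maximalMinors_add [P.IsPrime] (hP : maximalMinors M ≤ P) :
    P.height ≤ (P.map (Ideal.Quotient.mk (maximalMinors M))).height +
      (Fintype.card κ + 1 - Fintype.card ι : ℕ) := by
  obtain ⟨F, hcard, hmin⟩ := exists_finset_card_eq_height_map_mk hP
  rw [← hcard, ← Nat.cast_add]
  exact height_le_card_add_of_mem_minimalPrimes_maximalMinors_sup hmin

theorem height_le_ringKrullDim_quotient_maximalMinors_add [P.IsPrime] (hP : maximalMinors M ≤ P) :
    P.height ≤ ringKrullDim (A ⧸ maximalMinors M) +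
      (Fintype.card κ + 1 - Fintype.card ι : ℕ) := by
  have hprime := Ideal.isPrime_map_quotientMk_of_isPrime hP
  calc (P.height : WithBot ℕ∞) ≤ ((P.map (Ideal.Quotient.mk (maximalMinors M))).height +
          (Fintype.card κ + 1 - Fintype.card ι : ℕ) : ℕ∞) :=
        mod_cast height_le_height_map_mk_maximalMinors_add hP
    _ ≤ ringKrullDim (A ⧸ maximalMinors M) + (Fintype.card κ + 1 - Fintype.card ι : ℕ) := by
        rw [WithBot.coe_add]
        exact add_le_add_left (Ideal.height_le_ringKrullDim_of_ne_top hprime.ne_top) _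

end Height

section ZeroBlock

open scoped Matrix

variable {A ι κ : Type*} [CommRing A] [Fintype ι] [DecidableEq ι] [Finite κ]
  {M : Matrix ι κ A} {S : Finset ι} {T : Finset κ}

theorem maximalMinors_le_radical_of_zero_block (hM : ∀ i ∈ S, ∀ j ∉ T, M i j = 0) :
    maximalMinors M ≤
      (maximalMinors (M.submatrix (Subtype.val : S → ι) (Subtype.val : T → κ))).radical := by
  rw [Ideal.radical_eq_sInf]
  refine le_sInf fun Q ⟨hQle, hQ⟩ => ?_
  obtain ⟨y, ⟨i, hi⟩, hy⟩ := maximalMinors_le_iff_exists_vecMul_mem.1 hQle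
  let z : ι → A := fun r => if hr : r ∈ S then y ⟨r, hr⟩ else 0
  have hz (j : κ) : (z ᵥ* M) j = ∑ r : S, y r * M r j := by
    refine (Fintype.sum_of_injective (Subtype.val : S → ι) Subtype.val_injective _ _
      (fun r hr => ?_) fun r => ?_).symm
    · have hrS : r ∉ S := fun hrS => hr ⟨⟨r, hrS⟩, rfl⟩
      simp [z, hrS]
    · simp [z]
  refine maximalMinors_le_of_vecMul_mem (y := z) (i := i) (by simpa [z] using hi) fun j => ?_
  rw [hz]
  by_cases hj : j ∈ T
  · exact hy ⟨j, hj⟩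
  · rw [Finset.sum_eq_zero fun r _ => by rw [hM r r.2 j hj, mul_zero]]
    exact zero_mem Q

theorem height_le_ringKrullDim_quotient_maximalMinors_add_of_zero_block [IsNoetherianRing A]
    {P : Ideal A} [P.IsPrime] (hP : ∀ i j, M i j ∈ P) (hS : S.Nonempty)
    (hM : ∀ i ∈ S, ∀ j ∉ T, M i j = 0) :
    P.height ≤ ringKrullDim (A ⧸ maximalMinors M) + (T.card + 1 - S.card : ℕ) := by
  have hSne : Nonempty S := hS.to_subtype
  let N := M.submatrix (Subtype.val : S → ι) (Subtype.val : T → κ)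
  have hNP : maximalMinors N ≤ P := maximalMinors_le_of_forall_mem fun i j => hP i j
  calc (P.height : WithBot ℕ∞) ≤ ringKrullDim (A ⧸ maximalMinors N) +
          (Fintype.card T + 1 - Fintype.card S : ℕ) :=
        height_le_ringKrullDim_quotient_maximalMinors_add hNP
    _ ≤ ringKrullDim (A ⧸ maximalMinors M) + (T.card + 1 - S.card : ℕ) := by
        rw [Fintype.card_coe, Fintype.card_coe]
        gcongr
        exact ringKrullDim_quotient_le_of_le_radical (maximalMinors_le_radical_of_zero_block hM)

end ZeroBlock

section PolynomialRing

theorem ker_killCompl {R σ τ : Type*} [CommRing R] {f : σ → τ} (hf : Function.Injective f) :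
    RingHom.ker (killCompl hf : MvPolynomial τ R →ₐ[R] MvPolynomial σ R) =
      Ideal.span (X '' (Set.range f)ᶜ) := by
  refine le_antisymm (fun p hp => ?_) (Ideal.span_le.2 ?_)
  · let I : Ideal (MvPolynomial τ R) := Ideal.span (X '' (Set.range f)ᶜ)
    have hcomp : (Ideal.Quotient.mkₐ R I).comp ((rename f).comp (killCompl hf)) =
        Ideal.Quotient.mkₐ R I := by
      ext j
      by_cases hj : j ∈ Set.range f
      · obtain ⟨i, rfl⟩ := hj
        simp [killCompl]
      · have hX : (X j : MvPolynomial τ R) ∈ I := Ideal.subset_span ⟨j, hj, rfl⟩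
        simp [killCompl, hj, Ideal.Quotient.eq_zero_iff_mem.2 hX]
    have hp0 := DFunLike.congr_fun hcomp p
    rw [AlgHom.comp_apply, AlgHom.comp_apply, RingHom.mem_ker.1 hp, map_zero, map_zero] at hp0
    exact Ideal.Quotient.eq_zero_iff_mem.1 hp0.symm
  · rintro _ ⟨j, hj, rfl⟩
    simp [killCompl, Set.mem_range.not.1 hj]

theorem ringKrullDim_quotient_span_X {R τ : Type*} [CommRing R] [IsNoetherianRing R] [Finite τ]
    (S : Set τ) :
    ringKrullDim (MvPolynomial τ R ⧸ Ideal.span (X '' S : Set (MvPolynomial τ R))) =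
      ringKrullDim R + Nat.card ↥Sᶜ := by
  have hker := ker_killCompl (R := R) (Subtype.val_injective (p := (· ∈ Sᶜ)))
  rw [Subtype.range_coe_subtype, Set.ofPred_mem_eq, compl_compl] at hker
  have hsurj : Function.Surjective (killCompl (R := R) (Subtype.val_injective (p := (· ∈ Sᶜ)))) :=
    fun p => ⟨rename Subtype.val p, killCompl_rename_app _ p⟩
  rw [← MvPolynomial.ringKrullDim_of_isNoetherianRing, ← hker]
  exact ringKrullDim_eq_of_ringEquiv (Ideal.quotientKerAlgEquivOfSurjective hsurj).toRingEquiv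

theorem height_eq_natCard_of_isMaximal {k σ : Type*} [Field k] [Finite σ]
    (P : Ideal (MvPolynomial σ k)) [P.IsMaximal] : P.height = Nat.card σ := by
  induction σ using Finite.induction_empty_option with
  | of_equiv e ih =>
    let φ := (renameEquiv k e).toRingEquiv
    have hmax : (P.comap φ).IsMaximal := Ideal.comap_isMaximal_of_equiv φ
    rw [← φ.height_comap, ih, Nat.card_congr e]
  | h_empty =>
    let φ := (isEmptyAlgEquiv k PEmpty).symm.toRingEquiv
    have hprime : (P.comap φ).IsPrime := Ideal.comap_isPrime φ P
    rw [← φ.height_comap, (P.comap φ).eq_bot_of_prime, Ideal.height_bot, Nat.card_of_isEmpty,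
      Nat.cast_zero]
  | @h_option σ _ ih =>
    let φ := (optionEquivLeft k σ).toRingEquiv
    let Q := P.comap φ.symm
    have hQ : Q.IsMaximal := Ideal.comap_isMaximal_of_equiv φ.symm
    have hmax : (Q.comap Polynomial.C).IsMaximal :=
      Polynomial.isMaximal_comap_C_of_isJacobsonRing Q
    have hover : Q.LiesOver (Q.comap Polynomial.C) := ⟨rfl⟩
    rw [← φ.symm.height_comap, Polynomial.height_eq_height_add_one (Q.comap Polynomial.C) Q, ih,
      Finite.card_option, Nat.cast_succ]

end PolynomialRing

section BandMatrix

variable {A : Type*} [CommRing A] {c t : ℕ}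

/-- The `t × (t + c - 1)` matrix of bandwidth `c` whose `s`-th diagonal, `s < c`, consists of powers
of `x s`, with exponents prescribed by `d`. -/
def bandMatrix (x : Fin c → A) (d : Fin t → Fin (t + c - 1) → ℕ) :
    Matrix (Fin t) (Fin (t + c - 1)) A :=
  fun i j => if h : i.val ≤ j.val ∧ j.val < i.val + c then
    x ⟨j.val - i.val, by omega⟩ ^ d i j else 0

variable {x : Fin c → A} {d : Fin t → Fin (t + c - 1) → ℕ}

theorem bandMatrix_mem {I : Ideal A} {i : Fin t} {j : Fin (t + c - 1)}
    (hd : i.val ≤ j.val → 0 < d i j)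
    (hx : ∀ h : i.val ≤ j.val ∧ j.val < i.val + c, x ⟨j.val - i.val, by omega⟩ ∈ I) :
    bandMatrix x d i j ∈ I := by
  unfold bandMatrix
  split_ifs with h
  · exact Ideal.pow_mem_of_mem I (hx h) _ (hd h.1)
  · exact zero_mem I

theorem maximalMinors_bandMatrix_le (ht : 0 < t) (hd : ∀ i j, i.val ≤ j.val → 0 < d i j) :
    maximalMinors (bandMatrix x d) ≤ Ideal.span (Set.range x) := by
  have : Nonempty (Fin t) := ⟨⟨0, ht⟩⟩
  exact maximalMinors_le_of_forall_mem fun i j =>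
    bandMatrix_mem (hd i j) fun _ => Ideal.subset_span (Set.mem_range_self _)

-- The minor in the columns `s, s + 1, …` is, modulo the ideal of the `x r` with `r < s`,
-- triangular with powers of `x s` on the diagonal.
theorem mem_of_maximalMinors_bandMatrix_le {Q : Ideal A} [Q.IsPrime]
    (hd : ∀ i j, i.val ≤ j.val → 0 < d i j) (hQ : maximalMinors (bandMatrix x d) ≤ Q)
    (s : Fin c) : x s ∈ Q := by
  induction s using WellFoundedLT.induction with
  | _ s ih =>
    let g (i : Fin t) : Fin (t + c - 1) := ⟨i.val + s.val, by omega⟩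
    let N := ((bandMatrix x d).submatrix id g).map (Ideal.Quotient.mk Q)
    have hupper : N.IsUpperTriangular := fun i j hij => by
      refine Ideal.Quotient.eq_zero_iff_mem.2 (bandMatrix_mem (hd _ _) fun h => ih _ ?_)
      have hji : j.val < i.val := hij
      have hijs : i.val ≤ j.val + s.val := h.1
      rw [Fin.lt_def]
      change j.val + s.val - i.val < s.val
      omega
    have hdet : N.det = 0 := by
      have h := Ideal.Quotient.eq_zero_iff_mem.2 (maximalMinors_le_iff.1 hQ g)
      rwa [RingHom.map_det] at h
    rw [Matrix.det_of_isUpperTriangular hupper, Finset.prod_eq_zero_iff] at hdet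
    obtain ⟨i, -, hi⟩ := hdet
    have hdiag : bandMatrix x d i (g i) = x s ^ d i (g i) := by
      simp [bandMatrix, g]
    have hpow : x s ^ d i (g i) ∈ Q := hdiag ▸ Ideal.Quotient.eq_zero_iff_mem.1 hi
    exact Ideal.IsPrime.mem_of_pow_mem ‹_› _ hpow

theorem span_range_le_radical_maximalMinors_bandMatrix
    (hd : ∀ i j, i.val ≤ j.val → 0 < d i j) :
    Ideal.span (Set.range x) ≤ (maximalMinors (bandMatrix x d)).radical := by
  rw [Ideal.radical_eq_sInf, Ideal.span_le]
  rintro _ ⟨s, rfl⟩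
  exact Ideal.mem_sInf.2 fun {Q} ⟨hle, hQ⟩ => mem_of_maximalMinors_bandMatrix_le hd hle s

theorem ringKrullDim_quotient_maximalMinors_bandMatrix (ht : 0 < t)
    (hd : ∀ i j, i.val ≤ j.val → 0 < d i j) :
    ringKrullDim (A ⧸ maximalMinors (bandMatrix x d)) =
      ringKrullDim (A ⧸ Ideal.span (Set.range x)) :=
  le_antisymm
    (ringKrullDim_quotient_le_of_le_radical (span_range_le_radical_maximalMinors_bandMatrix hd))
    (ringKrullDim_quotient_le_of_le_radical
      ((maximalMinors_bandMatrix_le ht hd).trans Ideal.le_radical))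

theorem isHomogeneous_bandMatrix {R σ : Type*} [CommRing R] (v : Fin c → σ) (i : Fin t)
    (j : Fin (t + c - 1)) :
    (bandMatrix (fun s => (X (v s) : MvPolynomial σ R)) d i j).IsHomogeneous (d i j) := by
  unfold bandMatrix
  split_ifs
  · simpa using (isHomogeneous_X R _).pow (d i j)
  · exact isHomogeneous_zero _ _ _

end BandMatrix

section DegreeMatrix

variable {k : Type*} [Field k] {n c t : ℕ} {a : Fin (t + c - 1) → ℤ} {b : Fin t → ℤ}

theorem natCard_le_ringKrullDim_quotient_maximalMinors_add {σ ι κ : Type*} [Finite σ] [Fintype ι]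
    [DecidableEq ι] [Finite κ] {M : Matrix ι κ (MvPolynomial σ k)}
    (hM : ∀ i j, constantCoeff (M i j) = 0) {S : Finset ι} {T : Finset κ} (hS : S.Nonempty)
    (hzero : ∀ i ∈ S, ∀ j ∉ T, M i j = 0) :
    (Nat.card σ : WithBot ℕ∞) ≤
      ringKrullDim (MvPolynomial σ k ⧸ maximalMinors M) + (T.card + 1 - S.card : ℕ) := by
  let P := RingHom.ker (constantCoeff : MvPolynomial σ k →+* k)
  have hP : P.IsMaximal :=
    RingHom.ker_isMaximal_of_surjective _ fun r => ⟨C r, constantCoeff_C σ r⟩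
  have h := height_le_ringKrullDim_quotient_maximalMinors_add_of_zero_block (P := P) hM hS hzero
  rwa [height_eq_natCard_of_isMaximal P] at h

theorem pos_of_ringKrullDim_quotient_maximalMinors_eq (hc : 0 < c) (ha : Monotone a)
    (hb : Monotone b) {M : Matrix (Fin t) (Fin (t + c - 1)) (MvPolynomial (Fin (n + c + 1)) k)}
    (hhom : ∀ i j, (M i j).IsHomogeneous (a j - b i).toNat)
    (hzero : ∀ i j, a j - b i ≤ 0 → M i j = 0)
    (hdim : ringKrullDim (MvPolynomial (Fin (n + c + 1)) k ⧸ maximalMinors M) = (n + 1 : ℕ))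
    (i : Fin t) : 0 < a (Fin.castLE (by omega) i) - b i := by
  by_contra hi
  have hconst (r : Fin t) (j : Fin (t + c - 1)) : constantCoeff (M r j) = 0 := by
    by_cases h : a j - b r ≤ 0
    · rw [hzero r j h, map_zero]
    · rw [constantCoeff_eq]
      refine (hhom r j).coeff_eq_zero ?_
      rw [map_zero]
      omega
  have hblock : ∀ r ∈ Finset.Ici i, ∀ j ∉ Finset.Ioi (Fin.castLE (by omega : t ≤ t + c - 1) i),
      M r j = 0 := by
    intro r hr j hj
    have har := ha (not_lt.1 (Finset.mem_Ioi.not.1 hj))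
    have hbr := hb (Finset.mem_Ici.1 hr)
    exact hzero r j (by omega)
  have hle := natCard_le_ringKrullDim_quotient_maximalMinors_add hconst Finset.nonempty_Ici hblock
  rw [hdim, Nat.card_fin, Fin.card_Ici, Fin.card_Ioi, Fin.val_castLE] at hle
  norm_cast at hle
  omega

theorem exists_isHomogeneous_and_ringKrullDim_eq_of_pos (hc : 0 < c) (ht : 0 < t)
    (ha : Monotone a) (hpos : ∀ i : Fin t, 0 < a (Fin.castLE (by omega) i) - b i) :
    ∃ M : Matrix (Fin t) (Fin (t + c - 1)) (MvPolynomial (Fin (n + c + 1)) k),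
      (∀ i j, (M i j).IsHomogeneous (a j - b i).toNat) ∧
      (∀ i j, a j - b i ≤ 0 → M i j = 0) ∧
      ringKrullDim (MvPolynomial (Fin (n + c + 1)) k ⧸ maximalMinors M) = (n + 1 : ℕ) := by
  have hband (i : Fin t) (j : Fin (t + c - 1)) (hij : i.val ≤ j.val) : 0 < a j - b i :=
    (hpos i).trans_le (sub_le_sub_right (ha hij) _)
  let v (s : Fin c) : Fin (n + c + 1) := Fin.castLE (by omega) s
  have hv : Function.Injective v := Fin.castLE_injective _
  refine ⟨bandMatrix (fun s => X (v s)) fun i j => (a j - b i).toNat,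
    isHomogeneous_bandMatrix v, fun i j hij => dif_neg fun h => ?_, ?_⟩
  · exact (hband i j h.1).not_ge hij
  · rw [ringKrullDim_quotient_maximalMinors_bandMatrix ht fun i j hij =>
      Int.lt_toNat.2 (hband i j hij), Set.range_comp' X v, ringKrullDim_quotient_span_X,
      ringKrullDim_eq_zero_of_field, zero_add]
    congr 1
    rw [Nat.card_coe_set_eq, Set.ncard_compl, Set.ncard_range_of_injective hv]
    rw [Nat.card_fin, Nat.card_fin]
    omega

theorem stmt3_general (hc : 0 < c) (ht : 0 < t) (ha : Monotone a) (hb : Monotone b) :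
    (∃ A : Matrix (Fin t) (Fin (t + c - 1)) (MvPolynomial (Fin (n + c + 1)) k),
      (∀ i j, (A i j).IsHomogeneous (a j - b i).toNat) ∧
      (∀ i j, a j - b i ≤ 0 → A i j = 0) ∧
      ringKrullDim (MvPolynomial (Fin (n + c + 1)) k ⧸ maximalMinors A) = (n + 1 : ℕ)) ↔
    ∀ i : Fin t, 0 < a (Fin.castLE (by omega) i) - b i :=
  ⟨fun ⟨_, hhom, hzero, hdim⟩ =>
    pos_of_ringKrullDim_quotient_maximalMinors_eq hc ha hb hhom hzero hdim,
    exists_isHomogeneous_and_ringKrullDim_eq_of_pos hc ht ha⟩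

end DegreeMatrix

/-- Given integers `b_1 ≤ … ≤ b_t` and `a_0 ≤ … ≤ a_{t+c−2}`, there exists
a minimal `t × (t+c−1)` homogeneous matrix over `R = k[x_0,…,x_{n+c}]`, with entries of
degrees `a_j − b_i`, whose ideal of maximal minors has codimension exactly `c` (i.e. the
affine cone has Krull dimension `n+1`) — equivalently the locus `W_s(b;a)` of standard
determinantal schemes with this degree matrix is nonempty — if and only if
`a_{i−1} − b_i > 0` for all `i = 1,…,t`. -/
theorem stmt3 (k : Type) [Field k] [IsAlgClosed k]
    (n c t : ℕ) (hc : 2 ≤ c) (ht : 1 ≤ t)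
    (a : Fin (t + c - 1) → ℤ) (b : Fin t → ℤ)
    (ha : Monotone a) (hb : Monotone b) :
    (∃ A : Matrix (Fin t) (Fin (t + c - 1)) (MvPolynomial (Fin (n + c + 1)) k),
      (∀ (i : Fin t) (j : Fin (t + c - 1)), (A i j).IsHomogeneous (a j - b i).toNat) ∧
      (∀ (i : Fin t) (j : Fin (t + c - 1)), a j - b i ≤ 0 → A i j = 0) ∧
      ringKrullDim ((MvPolynomial (Fin (n + c + 1)) k) ⧸
        Ideal.span {d : MvPolynomial (Fin (n + c + 1)) k |
          ∃ g : Fin t → Fin (t + c - 1), Function.Injective g ∧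
            d = (A.submatrix id g).det}) = (n + 1 : ℕ)) ↔
    (∀ i : Fin t, 0 < a (Fin.castLE (by omega) i) - b i) :=
  stmt3_general (by omega) ht ha hb
end

section
/- In codimension 2, for D = R/I_D a Cohen–Macaulay determinantal quotient, there is an isomorphism (I_D/I_D²)^* ≅ Ext¹_R(I_D, I_D), and Ext¹_R(I_D, I_D) ≅ Ext¹_R(I_D, D) ⊗ I_D ≅ K_D(N+1) ⊗ I_D, where K_D is the canonical module of D and (·)^* = Hom_D(·, D). -/
open TensorProduct LinearMap

/-!
Write `R = k[x_0, …, x_N]` and `D = R/I`. Applying `Hom(-, -)` from the resolution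
`0 → F → G → I → 0` to `0 → I → R → D → 0` gives, by the snake lemma, the exact sequence
`Hom(I, R) → Hom(I, D) → Ext¹(I, I) → Ext¹(I, R)`. Its two outer maps vanish: `R` is factorial and
`I` lies in no proper principal ideal, so every `I → R` is a multiplication and has image in `I`;
and `I` kills `Ext¹(I, R)`, because multiplication by `a ∈ I` on `I` factors through `G`. Hence
`Hom(I/I², D) ≅ Hom(I, D) ≅ Ext¹(I, I)`. The remaining isomorphisms are `Ext¹(I, A) ≅
Ext¹(I, R) ⊗ A`, which is right exactness of `- ⊗ A`, and its instance `A = D`, where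
`Ext¹(I, R) ⊗ D ≅ Ext¹(I, R)` as `I` kills `Ext¹(I, R)`.
-/

section HomExactness

variable {R P A B C : Type*} [CommRing R] [AddCommGroup P] [Module R P] [AddCommGroup A]
  [Module R A] [AddCommGroup B] [Module R B] [AddCommGroup C] [Module R C]

lemma compRight_injective_of_injective {f : A →ₗ[R] B} (hf : Function.Injective f) :
    Function.Injective (f.compRight R : (P →ₗ[R] A) →ₗ[R] _) :=
  fun _ _ h ↦ LinearMap.cancel_left hf |>.1 h

lemma compRight_surjective_of_surjective [Module.Projective R P] {f : A →ₗ[R] B}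
    (hf : Function.Surjective f) : Function.Surjective (f.compRight R : (P →ₗ[R] A) →ₗ[R] _) :=
  fun g ↦ Module.projective_lifting_property f g hf

lemma exact_compRight_of_exact_of_injective {f : A →ₗ[R] B} {g : B →ₗ[R] C}
    (hfg : Function.Exact f g) (hf : Function.Injective f) :
    Function.Exact (f.compRight R : (P →ₗ[R] A) →ₗ[R] _) (g.compRight R) := by
  intro h
  refine ⟨fun hgh ↦
    ⟨h.codRestrictOfInjective f hf fun x ↦ ?_, h.codRestrictOfInjective_comp ..⟩, ?_⟩
  · exact (hfg (h x)).1 (LinearMap.congr_fun hgh x)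
  · rintro ⟨u, rfl⟩
    ext x
    exact hfg.apply_apply_eq_zero (u x)

end HomExactness

/-- The cokernel of the map `Hom(G, A) → Hom(F, A)` induced by `α : F → G`. For a resolution
`0 → F → G → M → 0` of `M` by projective modules this is `Ext¹(M, A)`. -/
abbrev HomCokernel {R F G : Type*} [CommRing R] [AddCommGroup F] [Module R F] [AddCommGroup G]
    [Module R G] (α : F →ₗ[R] G) (A : Type*) [AddCommGroup A] [Module R A] : Type _ :=
  (F →ₗ[R] A) ⧸ LinearMap.range (LinearMap.lcomp R A α)

namespace HomCokernel

variable {R F G M A B C : Type*} [CommRing R] [AddCommGroup F] [Module R F] [AddCommGroup G]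
  [Module R G] [AddCommGroup M] [Module R M] [AddCommGroup A] [Module R A] [AddCommGroup B]
  [Module R B] [AddCommGroup C] [Module R C]

section Map

variable (α : F →ₗ[R] G)

/-- The functoriality of `HomCokernel α` in its coefficient module. -/
def map (ι : A →ₗ[R] B) : HomCokernel α A →ₗ[R] HomCokernel α B :=
  Submodule.mapQ _ _ (ι.compRight R) <| by
    rintro _ ⟨g, rfl⟩
    exact ⟨ι ∘ₗ g, rfl⟩

lemma map_eq_zero_of_isTorsionBySet [Module.Finite R F] [Module.Projective R F] (ι : A →ₗ[R] R)
    (h : Module.IsTorsionBySet R (HomCokernel α R) (LinearMap.range ι)) : map α ι = 0 := by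
  have map_dualTensorHom (t : Module.Dual R F ⊗[R] A) :
      map α ι (Submodule.Quotient.mk (dualTensorHom R F A t)) = 0 := by
    induction t with
    | zero => simp
    | add s t hs ht => rw [map_add, Submodule.Quotient.mk_add, map_add, hs, ht, add_zero]
    | tmul φ a =>
      have h_smul : ι ∘ₗ dualTensorHom R F A (φ ⊗ₜ a) = ι a • φ := by
        ext x
        simp [mul_comm]
      exact (congrArg Submodule.Quotient.mk h_smul).trans
        (h (a := ⟨ι a, LinearMap.mem_range_self ι a⟩) (x := Submodule.Quotient.mk φ))
  ext f
  obtain ⟨t, rfl⟩ := (dualTensorHomEquiv R F A).surjective f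
  exact map_dualTensorHom t

end Map

section Connecting

variable {α : F →ₗ[R] G} {β : G →ₗ[R] M} {ι : A →ₗ[R] B} {π : B →ₗ[R] C}

/-- The connecting map `Hom(M, C) → Ext¹(M, A)` of a short exact sequence `0 → A → B → C → 0`. -/
noncomputable def connecting [Module.Projective R G] (hαβ : Function.Exact α β)
    (hβ : Function.Surjective β) (hιπ : Function.Exact ι π) (hι : Function.Injective ι)
    (hπ : Function.Surjective π) : (M →ₗ[R] C) →ₗ[R] HomCokernel α A :=
  SnakeLemma.δ' (LinearMap.lcomp R A α) (LinearMap.lcomp R B α) (LinearMap.lcomp R C α)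
    (ι.compRight R) (π.compRight R) (exact_compRight_of_exact_of_injective hιπ hι)
    (ι.compRight R) (π.compRight R) (exact_compRight_of_exact_of_injective hιπ hι) rfl rfl
    (LinearMap.lcomp R C β) (LinearMap.exact_lcomp_of_exact_of_surjective C hαβ hβ)
    (Submodule.mkQ _) (LinearMap.exact_map_mkQ_range _)
    (compRight_surjective_of_surjective hπ) (compRight_injective_of_injective hι)

variable [Module.Projective R G] (hαβ : Function.Exact α β) (hβ : Function.Surjective β)
  (hιπ : Function.Exact ι π) (hι : Function.Injective ι) (hπ : Function.Surjective π)

lemma exact_compRight_connecting :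
    Function.Exact (π.compRight R : (M →ₗ[R] B) →ₗ[R] _) (connecting hαβ hβ hιπ hι hπ) :=
  SnakeLemma.exact_δ'_right _ _ _ _ _ _ _ _ _ _ _ (LinearMap.lcomp R B β)
    (LinearMap.exact_lcomp_of_exact_of_surjective B hαβ hβ) _ _ _ _ _ _ _ rfl
    (LinearMap.lcomp_injective_of_surjective β hβ)

lemma exact_connecting_map :
    Function.Exact (connecting hαβ hβ hιπ hι hπ) (map α ι) :=
  SnakeLemma.exact_δ'_left _ _ _ _ _ _ _ _ _ _ _ _ _ _ _ (Submodule.mkQ _)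
    (LinearMap.exact_map_mkQ_range _) _ _ _ rfl (Submodule.mkQ_surjective _)

lemma connecting_bijective (h_hom : ∀ f : M →ₗ[R] B, π ∘ₗ f = 0) (h_map : map α ι = 0) :
    Function.Bijective (connecting hαβ hβ hιπ hι hπ) := by
  have h_zero : (π.compRight R : (M →ₗ[R] B) →ₗ[R] _) = 0 := LinearMap.ext h_hom
  have exact_left := exact_compRight_connecting hαβ hβ hιπ hι hπ
  have exact_right := exact_connecting_map hαβ hβ hιπ hι hπ
  rw [h_zero] at exact_left
  rw [h_map] at exact_right
  exact ⟨(LinearMap.exact_zero_iff_injective _ _).1 exact_left,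
    (LinearMap.exact_zero_iff_surjective _ _).1 exact_right⟩

end Connecting

section Torsion

variable {α : F →ₗ[R] G} {β : G →ₗ[R] M}

lemma exists_comp_eq_smul_id (hα : Function.Injective α) (hαβ : Function.Exact α β) {a : R}
    {σ : M →ₗ[R] G} (hσ : β ∘ₗ σ = a • LinearMap.id) :
    ∃ s : G →ₗ[R] F, s ∘ₗ α = a • LinearMap.id := by
  have hβ_zero : β ∘ₗ (a • LinearMap.id - σ ∘ₗ β) = 0 := by
    rw [LinearMap.comp_sub, ← LinearMap.comp_assoc, hσ]
    ext
    simp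
  obtain ⟨s, hs⟩ := (exact_compRight_of_exact_of_injective hαβ hα _).1 hβ_zero
  refine ⟨s, LinearMap.cancel_left hα |>.1 ?_⟩
  calc α ∘ₗ s ∘ₗ α = (a • LinearMap.id - σ ∘ₗ β) ∘ₗ α := congrArg (· ∘ₗ α) hs
    _ = α ∘ₗ (a • LinearMap.id) := by
      ext x
      simp [hαβ.apply_apply_eq_zero x]

lemma smul_eq_zero_of_comp_eq_smul_id {a : R} {s : G →ₗ[R] F} (hs : s ∘ₗ α = a • LinearMap.id)
    (x : HomCokernel α A) : a • x = 0 := by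
  obtain ⟨f, rfl⟩ := Submodule.mkQ_surjective _ x
  rw [← map_smul]
  refine (Submodule.Quotient.mk_eq_zero _).2 ⟨f ∘ₗ s, ?_⟩
  rw [LinearMap.lcomp_apply', LinearMap.comp_assoc, hs, LinearMap.comp_smul, LinearMap.comp_id]

lemma isTorsionBySet_range (hα : Function.Injective α) (hβ : Function.Surjective β)
    (hαβ : Function.Exact α β) {ι : M →ₗ[R] R} (hι : Function.Injective ι) :
    Module.IsTorsionBySet R (HomCokernel α A) (LinearMap.range ι) := by
  rintro x ⟨_, m, rfl⟩
  obtain ⟨g, rfl⟩ := hβ m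
  have h_factor : β ∘ₗ (LinearMap.toSpanSingleton R G g ∘ₗ ι) = ι (β g) • LinearMap.id := by
    ext y
    exact hι (by simp [mul_comm])
  obtain ⟨s, hs⟩ := exists_comp_eq_smul_id hα hαβ h_factor
  exact smul_eq_zero_of_comp_eq_smul_id hs x

end Torsion

section Tensor

variable [Module.Finite R F] [Module.Projective R F]

lemma map_dualTensorHomEquiv_range_rTensor [Module.Finite R G] [Module.Projective R G]
    (α : F →ₗ[R] G) (A : Type*) [AddCommGroup A] [Module R A] :
    Submodule.map (dualTensorHomEquiv R F A).toLinearMap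
      (LinearMap.range (α.dualMap.rTensor A)) = LinearMap.range (LinearMap.lcomp R A α) := by
  calc Submodule.map (dualTensorHomEquiv R F A).toLinearMap (LinearMap.range (α.dualMap.rTensor A))
      = LinearMap.range (dualTensorHom R F A ∘ₗ α.dualMap.rTensor A) :=
        (LinearMap.range_comp _ _).symm
    _ = LinearMap.range (LinearMap.lcomp R A α ∘ₗ dualTensorHom R G A) := by
        rw [dualTensorHom_comp_rTensor_dualMap]
    _ = LinearMap.range (LinearMap.lcomp R A α) :=
        LinearMap.range_comp_of_range_eq_top _ (dualTensorHomEquiv R G A).range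

/-- The isomorphism `Ext¹(M, A) ≅ Ext¹(M, R) ⊗ A`, which comes from the right exactness of `- ⊗ A`
and `Hom(P, A) ≅ Hom(P, R) ⊗ A` for `P` finite projective. -/
noncomputable def equivTensor [Module.Finite R G] [Module.Projective R G] (α : F →ₗ[R] G)
    (A : Type*) [AddCommGroup A] [Module R A] :
    HomCokernel α A ≃ₗ[R] HomCokernel α R ⊗[R] A :=
  (Submodule.Quotient.equiv _ _ (dualTensorHomEquiv R F A)
    (map_dualTensorHomEquiv_range_rTensor α A)).symm ≪≫ₗ
  rTensor.equiv A (LinearMap.exact_map_mkQ_range α.dualMap) (Submodule.mkQ_surjective _)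

/-- The isomorphism `Ext¹(M, R ⧸ I) ≅ Ext¹(M, R)` for an ideal `I` that kills `Ext¹(M, R)`. -/
noncomputable def equivOfIsTorsionBySet [Module.Finite R G] [Module.Projective R G]
    (α : F →ₗ[R] G) {I : Ideal R} (h : Module.IsTorsionBySet R (HomCokernel α R) I) :
    HomCokernel α (R ⧸ I) ≃ₗ[R] HomCokernel α R :=
  equivTensor α (R ⧸ I) ≪≫ₗ tensorQuotEquivQuotSMul _ I ≪≫ₗ
    Submodule.quotEquivOfEqBot _ (eq_bot_iff.2 <| Submodule.smul_le.2 fun a ha x _ ↦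
      (Submodule.mem_bot R).2 (h (a := ⟨a, ha⟩) (x := x)))

end Tensor

end HomCokernel

section Cotangent

variable {R A : Type*} [CommRing R] [AddCommGroup A] [Module R A] {I : Ideal R}

/-- Linear maps from `I` to a module killed by `I` are the same as linear maps from `I/I²`. -/
noncomputable def cotangentHomEquiv (h : Module.IsTorsionBySet R A I) :
    (I.Cotangent →ₗ[R] A) ≃ₗ[R] (I →ₗ[R] A) :=
  .ofBijective (LinearMap.lcomp R A I.toCotangent)
    ⟨LinearMap.lcomp_injective_of_surjective _ I.toCotangent_surjective, fun f ↦
      ⟨Ideal.Cotangent.lift f fun x y ↦ (map_smul f (x : R) y).trans (h (a := x) (x := f y)),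
        LinearMap.ext fun _ ↦ rfl⟩⟩

end Cotangent

section Ideal

variable {R F G M : Type*} [CommRing R] [AddCommGroup F] [Module R F] [AddCommGroup G] [Module R G]
  [AddCommGroup M] [Module R M] {I : Ideal R} {α : F →ₗ[R] G} {β : G →ₗ[R] M}

lemma range_subtype_comp_linearEquiv (e : M ≃ₗ[R] I) :
    LinearMap.range (I.subtype ∘ₗ e.toLinearMap) = I := by
  rw [LinearMap.range_comp_of_range_eq_top _ e.range, Submodule.range_subtype]

lemma HomCokernel.isTorsionBySet_ideal {A : Type*} [AddCommGroup A] [Module R A] (e : M ≃ₗ[R] I)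
    (hα : Function.Injective α) (hβ : Function.Surjective β) (hαβ : Function.Exact α β) :
    Module.IsTorsionBySet R (HomCokernel α A) I := by
  have h := isTorsionBySet_range (A := A) hα hβ hαβ (ι := I.subtype ∘ₗ e.toLinearMap)
    (I.injective_subtype.comp e.injective)
  rwa [range_subtype_comp_linearEquiv] at h

/-- The isomorphism `Hom(I/I², R/I) ≅ Ext¹(I, I)` for an ideal `I` such that every `I → R` has its
image in `I`; the module `M` stands for `I`. -/
noncomputable def cotangentHomEquivHomCokernel [Module.Finite R F] [Module.Projective R F]
    [Module.Projective R G] (e : M ≃ₗ[R] I) (hα : Function.Injective α)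
    (hβ : Function.Surjective β) (hαβ : Function.Exact α β)
    (hI : ∀ f : I →ₗ[R] R, LinearMap.range f ≤ I) :
    (I.Cotangent →ₗ[R] R ⧸ I) ≃ₗ[R] HomCokernel α M :=
  have h_range := range_subtype_comp_linearEquiv e
  have h_exact : Function.Exact (I.subtype ∘ₗ e.toLinearMap) I.mkQ :=
    LinearMap.exact_iff.2 (I.ker_mkQ.trans h_range.symm)
  have h_hom (f : M →ₗ[R] R) : I.mkQ ∘ₗ f = 0 := LinearMap.ext fun m ↦
    (Submodule.Quotient.mk_eq_zero I).2 <|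
      hI (f ∘ₗ e.symm.toLinearMap) ⟨e m, congrArg f (e.symm_apply_apply m)⟩
  have h_map : HomCokernel.map α (I.subtype ∘ₗ e.toLinearMap) = 0 :=
    HomCokernel.map_eq_zero_of_isTorsionBySet α _ <|
      h_range.symm ▸ HomCokernel.isTorsionBySet_ideal e hα hβ hαβ
  have h_torsion : Module.IsTorsionBySet R (R ⧸ I) I :=
    (Module.isTorsionBySet_quotient_iff I I).2 fun x _ ha ↦ I.mul_mem_right x ha
  cotangentHomEquiv h_torsion ≪≫ₗ
    LinearEquiv.congrLeft (R ⧸ I) R e.symm ≪≫ₗ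
    .ofBijective (HomCokernel.connecting hαβ hβ h_exact (I.injective_subtype.comp e.injective)
      I.mkQ_surjective) (HomCokernel.connecting_bijective _ _ _ _ _ h_hom h_map)

theorem stmt9_general [Module.Finite R F] [Module.Projective R F] [Module.Finite R G]
    [Module.Projective R G] (e : M ≃ₗ[R] I) (hα : Function.Injective α)
    (hβ : Function.Surjective β) (hαβ : Function.Exact α β)
    (hI : ∀ f : I →ₗ[R] R, LinearMap.range f ≤ I) :
    Nonempty ((I.Cotangent →ₗ[R] R ⧸ I) ≃ₗ[R] HomCokernel α M) ∧
    Nonempty (HomCokernel α M ≃ₗ[R] HomCokernel α (R ⧸ I) ⊗[R] M) ∧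
    Nonempty (HomCokernel α (R ⧸ I) ⊗[R] M ≃ₗ[R] HomCokernel α R ⊗[R] M) := by
  let quotientEquiv := HomCokernel.equivOfIsTorsionBySet α
    (HomCokernel.isTorsionBySet_ideal e hα hβ hαβ)
  let tensorEquiv := TensorProduct.congr quotientEquiv (LinearEquiv.refl R M)
  exact ⟨⟨cotangentHomEquivHomCokernel e hα hβ hαβ hI⟩,
    ⟨HomCokernel.equivTensor α M ≪≫ₗ tensorEquiv.symm⟩, ⟨tensorEquiv⟩⟩

end Ideal

lemma range_le_of_forall_le_span_singleton_isUnit {R : Type*} [CommRing R] [IsDomain R]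
    [UniqueFactorizationMonoid R] {I : Ideal R} (hI : ∀ a, I ≤ Ideal.span {a} → IsUnit a)
    (f : I →ₗ[R] R) : LinearMap.range f ≤ I := by
  rintro _ ⟨x, rfl⟩
  obtain rfl | hx := eq_or_ne x 0
  · simp
  have hx' : (x : R) ≠ 0 := fun h ↦ hx (Subtype.ext h)
  -- `t / a` is the fraction `f x / x` in lowest terms, so `a` divides every element of `I`.
  obtain ⟨a, t, c, hat, hca, hct⟩ :=
    UniqueFactorizationMonoid.exists_reduced_factors (x : R) hx' (f x)
  have hc : c ≠ 0 := left_ne_zero_of_mul (hca.trans_ne hx')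
  have cross_mul (b : I) : a * f b = t * b := by
    have h_swap : (x : R) * f b = f x * b := by
      have h_smul : (x : R) • b = (b : R) • x := Subtype.ext (mul_comm _ _)
      simpa [mul_comm] using congrArg f h_smul
    apply mul_left_cancel₀ hc
    rw [← mul_assoc, ← mul_assoc, hca, hct, h_swap]
  have le_span : I ≤ Ideal.span {a} := fun b hb ↦
    Ideal.mem_span_singleton.2 (hat.dvd_of_dvd_mul_left ⟨f ⟨b, hb⟩, (cross_mul ⟨b, hb⟩).symm⟩)
  exact (Ideal.unit_mul_mem_iff_mem I (hI a le_span)).1 (cross_mul x ▸ I.mul_mem_left t x.2)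

section PolynomialRing

variable {k : Type*} [Field k] {n : ℕ}

lemma height_eq_of_isMaximal (M : Ideal (MvPolynomial (Fin n) k)) [M.IsMaximal] :
    M.height = n := by
  induction n with
  | zero =>
    have h_height := Ideal.height_le_ringKrullDim_of_ne_top (Ideal.IsPrime.ne_top' (I := M))
    have h_dim : ringKrullDim (MvPolynomial (Fin 0) k) = 0 := by simp
    rw [h_dim] at h_height
    exact_mod_cast nonpos_iff_eq_zero.1 (WithBot.coe_le_coe.1 h_height)
  | succ n ih =>
    let e := (MvPolynomial.finSuccEquiv k n).toRingEquiv
    have : (M.map e).IsMaximal := Ideal.map_isMaximal_of_equiv e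
    have : ((M.map e).under (MvPolynomial (Fin n) k)).IsMaximal :=
      Polynomial.isMaximal_comap_C_of_isJacobsonRing (M.map e)
    have : (M.map e).LiesOver ((M.map e).under (MvPolynomial (Fin n) k)) := ⟨rfl⟩
    calc M.height = (M.map e).height := (e.height_map M).symm
      _ = ((M.map e).under (MvPolynomial (Fin n) k)).height + 1 :=
        Polynomial.height_eq_height_add_one _ _
      _ = (n + 1 : ℕ) := by rw [ih, Nat.cast_succ]

lemma isUnit_of_le_span_singleton {I : Ideal (MvPolynomial (Fin n) k)}
    (hI : ringKrullDim (MvPolynomial (Fin n) k ⧸ I) + 1 < n) {a : MvPolynomial (Fin n) k}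
    (ha : I ≤ Ideal.span {a}) : IsUnit a := by
  by_contra h_unit
  obtain ⟨M, hM, haM⟩ := Ideal.exists_le_maximal (Ideal.span {a})
    (Ideal.span_singleton_eq_top.not.2 h_unit)
  refine hI.not_ge ?_
  calc (n : WithBot ℕ∞) = M.height := by rw [height_eq_of_isMaximal M]; rfl
    _ ≤ ringKrullDim (MvPolynomial (Fin n) k ⧸ Ideal.span {a}) + 1 :=
      Ideal.height_le_ringKrullDim_quotient_add_one (haM (Ideal.mem_span_singleton_self a))
    _ ≤ ringKrullDim (MvPolynomial (Fin n) k ⧸ I) + 1 := by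
      gcongr
      exact ringKrullDim_le_of_surjective _ (Ideal.Quotient.factor_surjective ha)

end PolynomialRing

/-- For `D = R/I_D` a codimension 2 Cohen–Macaulay determinantal
quotient of `R = k[x_0,…,x_N]` with Hilbert–Burch resolution `0 → F → G → I_D → 0`
(the ideal `I_D` realized as the module `IM`), there are (graded, twists suppressed)
isomorphisms `(I_D/I_D²)^* ≅ Ext¹_R(I_D, I_D) ≅ Ext¹_R(I_D, D) ⊗ I_D ≅ K_D(N+1) ⊗ I_D`,
where the `Ext¹` groups are computed from the resolution (`Ext¹_R(I_D, M) =
coker (Hom(G,M) → Hom(F,M))`) and `K_D(N+1) = Ext¹_R(I_D, R) = coker (G^* → F^*)`. -/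
theorem stmt9 (k : Type) [Field k] (N : ℕ) (hN : 2 ≤ N)
    (I : Ideal (MvPolynomial (Fin (N + 1)) k))
    (F G IM : Type) [AddCommGroup F] [Module (MvPolynomial (Fin (N + 1)) k) F]
    [Module.Finite (MvPolynomial (Fin (N + 1)) k) F]
    [Module.Free (MvPolynomial (Fin (N + 1)) k) F]
    [AddCommGroup G] [Module (MvPolynomial (Fin (N + 1)) k) G]
    [Module.Finite (MvPolynomial (Fin (N + 1)) k) G]
    [Module.Free (MvPolynomial (Fin (N + 1)) k) G]
    [AddCommGroup IM] [Module (MvPolynomial (Fin (N + 1)) k) IM]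
    -- `IM` is the ideal `I_D` viewed as an `R`-module
    (eI : IM ≃ₗ[MvPolynomial (Fin (N + 1)) k] I)
    (α : F →ₗ[MvPolynomial (Fin (N + 1)) k] G)
    (β : G →ₗ[MvPolynomial (Fin (N + 1)) k] IM)
    (hα : Function.Injective α) (hβ : Function.Surjective β) (hexact : Function.Exact α β)
    (hcodim : ringKrullDim ((MvPolynomial (Fin (N + 1)) k) ⧸ I) = ((N - 1 : ℕ) : ℕ)) :
    Nonempty ((I.Cotangent →ₗ[MvPolynomial (Fin (N + 1)) k]
        ((MvPolynomial (Fin (N + 1)) k) ⧸ I)) ≃ₗ[MvPolynomial (Fin (N + 1)) k]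
      ((F →ₗ[MvPolynomial (Fin (N + 1)) k] IM) ⧸
        LinearMap.range (LinearMap.lcomp (MvPolynomial (Fin (N + 1)) k) IM α))) ∧
    Nonempty (((F →ₗ[MvPolynomial (Fin (N + 1)) k] IM) ⧸
        LinearMap.range (LinearMap.lcomp (MvPolynomial (Fin (N + 1)) k) IM α))
      ≃ₗ[MvPolynomial (Fin (N + 1)) k]
      (((F →ₗ[MvPolynomial (Fin (N + 1)) k] ((MvPolynomial (Fin (N + 1)) k) ⧸ I)) ⧸
          LinearMap.range (LinearMap.lcomp (MvPolynomial (Fin (N + 1)) k)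
            ((MvPolynomial (Fin (N + 1)) k) ⧸ I) α))
        ⊗[MvPolynomial (Fin (N + 1)) k] IM)) ∧
    Nonempty ((((F →ₗ[MvPolynomial (Fin (N + 1)) k]
          ((MvPolynomial (Fin (N + 1)) k) ⧸ I)) ⧸
          LinearMap.range (LinearMap.lcomp (MvPolynomial (Fin (N + 1)) k)
            ((MvPolynomial (Fin (N + 1)) k) ⧸ I) α))
        ⊗[MvPolynomial (Fin (N + 1)) k] IM)
      ≃ₗ[MvPolynomial (Fin (N + 1)) k]
      (((Module.Dual (MvPolynomial (Fin (N + 1)) k) F) ⧸ LinearMap.range α.dualMap)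
        ⊗[MvPolynomial (Fin (N + 1)) k] IM)) := by
  have h_dim : ringKrullDim (MvPolynomial (Fin (N + 1)) k ⧸ I) + 1 < (N + 1 : ℕ) := by
    rw [hcodim]
    exact_mod_cast (by lia : N - 1 + 1 < N + 1)
  exact stmt9_general eI hα hβ hexact <|
    range_le_of_forall_le_span_singleton_isUnit fun _ ↦ isUnit_of_le_span_singleton h_dim
end

section
/- Dualizing the exact sequence 0 → R(a) → B_c → B_{c−1} → 0 of graded R-modules, where B_i = coker(φ_i) and M_i = Ext¹_R(B_i, R) as in the standard determinantal setup, yields a short exact sequence 0 → Hom_R(B_{c−1}, R) → Hom_R(B_c, R) → I_{D_{c−1}}(−a) → 0, where a = a_{t+c−2} and I_{D_{c−1}} is the determinantal ideal of the submatrix with the last column deleted. -/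
open LinearMap

set_option synthInstance.maxHeartbeats 1000000
set_option maxHeartbeats 1000000

/-!
In coordinates `Hom(B_c, R)` consists of the `y` with `y ᵥ* A = 0`, and the map to `R` sends `y` to
its last coordinate. Its kernel is `Hom(B_{c-1}, R)` by left exactness of `Hom(-, R)`. By Laplace
expansion along an extra column, the signed maximal minors of `A` on the last row and `t` others
form such a `y`, so every maximal minor of the submatrix is attained.

Conversely, let `f₁, …, f_t` be the linear forms on `R^{s+1}` given by the columns of `A`. Exactness
of the Buchsbaum–Rim complex makes `y` the contraction of some `u ∈ ⋀^{t+1} R^{s+1}` by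
`f₁ ∧ ⋯ ∧ f_t`, and the last coordinate of such a contraction only involves minors of the
submatrix. The complex is exact because multiplication by a power of each maximal minor is
null-homotopic on it, while the ideal of maximal minors contains a weakly regular sequence at least
as long as the complex; over a polynomial ring over a field, codimension provides that sequence by
induction on the number of variables, after a change of variables that makes an element of the
ideal monic.
-/

section Acyclicity

open RingTheory.Sequence

variable {R : Type*} [CommRing R] {F : ℕ → Type*} [∀ k, AddCommGroup (F k)] [∀ k, Module R (F k)]
  {d : ∀ k, F (k + 1) →ₗ[R] F k}

/-- A graded endomorphism `φ` of the complex `(F, d)` is null-homotopic in positive degrees: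
`φ = d h + h d` on every `F (k + 1)`. Nothing is required on `F 0`, since we are only interested in
the homology in positive degrees. -/
def NullHomotopic (d : ∀ k, F (k + 1) →ₗ[R] F k) (φ : ∀ k, Module.End R (F k)) : Prop :=
  ∃ h : ∀ k, F k →ₗ[R] F (k + 1), ∀ k, φ (k + 1) = d (k + 1) ∘ₗ h (k + 1) + h k ∘ₗ d k

namespace NullHomotopic

variable {φ ψ : ∀ k, Module.End R (F k)}

lemma zero : NullHomotopic d 0 :=
  ⟨fun _ ↦ 0, fun k ↦ by simp⟩

lemma add (hφ : NullHomotopic d φ) (hψ : NullHomotopic d ψ) : NullHomotopic d (φ + ψ) := by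
  obtain ⟨h, hh⟩ := hφ
  obtain ⟨h', hh'⟩ := hψ
  refine ⟨fun k ↦ h k + h' k, fun k ↦ ?_⟩
  rw [Pi.add_apply, hh, hh', comp_add, add_comp]
  abel

lemma smul (r : R) (hφ : NullHomotopic d φ) : NullHomotopic d (r • φ) := by
  obtain ⟨h, hh⟩ := hφ
  exact ⟨fun k ↦ r • h k, fun k ↦ by rw [Pi.smul_apply, hh, comp_smul, smul_comp, smul_add]⟩

lemma chainMap_mul (hφ : NullHomotopic d φ) (hψ : ∀ k, d k ∘ₗ ψ (k + 1) = ψ k ∘ₗ d k) :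
    NullHomotopic d (ψ * φ) := by
  obtain ⟨h, hh⟩ := hφ
  refine ⟨fun k ↦ ψ (k + 1) ∘ₗ h k, fun k ↦ ?_⟩
  rw [Pi.mul_apply, hh, Module.End.mul_eq_comp, comp_add, ← comp_assoc, ← comp_assoc, ← comp_assoc,
    hψ]

lemma quotSMulTop (x : R) (hφ : NullHomotopic d φ) :
    NullHomotopic (fun k ↦ QuotSMulTop.map x (d k)) fun k ↦ QuotSMulTop.map x (φ k) := by
  obtain ⟨h, hh⟩ := hφ
  refine ⟨fun k ↦ QuotSMulTop.map x (h k), fun k ↦ ?_⟩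
  simp only [hh, map_add, QuotSMulTop.map_comp]

end NullHomotopic

/-- The defect `r - (d h + h d)` of `h` as a contracting homotopy of the multiplication by `r`. -/
def homotopyDefect (d : ∀ k, F (k + 1) →ₗ[R] F k) (h : ∀ k, F k →ₗ[R] F (k + 1)) (r : R) :
    ∀ k, Module.End R (F k)
  | 0 => r • 1 - d 0 ∘ₗ h 0
  | k + 1 => r • 1 - (d (k + 1) ∘ₗ h (k + 1) + h k ∘ₗ d k)

lemma homotopyDefect_comm (hd : ∀ k, d k ∘ₗ d (k + 1) = 0) (h : ∀ k, F k →ₗ[R] F (k + 1)) (r : R)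
    (k : ℕ) :
    d k ∘ₗ homotopyDefect d h r (k + 1) = homotopyDefect d h r k ∘ₗ d k := by
  ext z
  have hdd (k : ℕ) (z : F (k + 2)) : d k (d (k + 1) z) = 0 := LinearMap.congr_fun (hd k) z
  cases k <;> simp [homotopyDefect, hdd]

lemma nullHomotopic_pow_sub_prod_homotopyDefect {ι : Type*} (hd : ∀ k, d k ∘ₗ d (k + 1) = 0)
    (h : ι → ∀ k, F k →ₗ[R] F (k + 1)) (r : R) (l : List ι) :
    NullHomotopic d (r ^ l.length • 1 - (l.map fun i ↦ homotopyDefect d (h i) r).prod) := by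
  induction l with
  | nil => simpa using NullHomotopic.zero
  | cons i l ih =>
    have hi : NullHomotopic d (r • 1 - homotopyDefect d (h i) r) :=
      ⟨h i, fun k ↦ sub_sub_cancel _ _⟩
    convert (ih.chainMap_mul (homotopyDefect_comm hd (h i) r)).add (hi.smul (r ^ l.length)) using 1
    rw [List.length_cons, List.map_cons, List.prod_cons, mul_sub, mul_smul_comm, mul_one, smul_sub,
      smul_smul, ← pow_succ]
    abel

/-- The scalars acting null-homotopically (in positive degrees) on the complex `(F, d)`. -/
def nullHomotopyIdeal (d : ∀ k, F (k + 1) →ₗ[R] F k) : Ideal R where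
  carrier := {r | NullHomotopic d (r • 1)}
  zero_mem' := by simpa only [Set.mem_ofPred_eq, zero_smul] using NullHomotopic.zero
  add_mem' hr hs := by simpa only [Set.mem_ofPred_eq, add_smul] using hr.add hs
  smul_mem' c r hr := by simpa only [Set.mem_ofPred_eq, smul_eq_mul, mul_smul] using hr.smul c

lemma nullHomotopyIdeal_le_quotSMulTop (d : ∀ k, F (k + 1) →ₗ[R] F k) (x : R) :
    nullHomotopyIdeal d ≤
      nullHomotopyIdeal (F := fun k ↦ QuotSMulTop x (F k)) fun k ↦ QuotSMulTop.map x (d k) := by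
  intro r hr
  have hmap (k) : QuotSMulTop.map x ((r • 1 : ∀ k, Module.End R (F k)) k) = r • .id := by
    rw [Pi.smul_apply, map_smul, Pi.one_apply, Module.End.one_eq_id, QuotSMulTop.map_id]
  obtain ⟨h, hh⟩ := NullHomotopic.quotSMulTop x hr
  exact ⟨h, fun k ↦ (hmap (k + 1)).symm.trans (hh k)⟩

lemma smul_mem_range_of_mem_nullHomotopyIdeal {r : R} (hr : r ∈ nullHomotopyIdeal d) {k : ℕ}
    {z : F (k + 1)} (hz : d k z = 0) : r • z ∈ range (d (k + 1)) := by
  obtain ⟨h, hh⟩ := hr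
  exact ⟨h (k + 1) z, by simpa [hz] using (LinearMap.congr_fun (hh k) z).symm⟩

lemma mem_range_of_smul_mem_range {X Y Z : Type*} [AddCommGroup X] [AddCommGroup Y]
    [AddCommGroup Z] [Module R X] [Module R Y] [Module R Z] {f : X →ₗ[R] Y} {g : Y →ₗ[R] Z} {r : R}
    (hr : IsSMulRegular Z r) (hgf : g ∘ₗ f = 0)
    (hex : Function.Exact (QuotSMulTop.map r f) (QuotSMulTop.map r g))
    {z : Z} (hz : r • z ∈ range g) : z ∈ range g := by
  obtain ⟨y, hy⟩ := hz
  have hy0 : QuotSMulTop.map r g (Submodule.Quotient.mk y) = 0 := by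
    rw [QuotSMulTop.map_apply_mk, hy, Submodule.Quotient.mk_eq_zero]
    exact Submodule.smul_mem_pointwise_smul z r ⊤ Submodule.mem_top
  obtain ⟨q, hq⟩ := (hex _).1 hy0
  obtain ⟨x, rfl⟩ := Submodule.Quotient.mk_surjective _ q
  rw [QuotSMulTop.map_apply_mk, eq_comm, Submodule.Quotient.eq] at hq
  obtain ⟨y', -, hy'⟩ := hq
  refine ⟨y', hr ?_⟩
  have hgfx : g (f x) = 0 := LinearMap.congr_fun hgf x
  calc r • g y' = g (y - f x) := by rw [← map_smul]; exact congrArg g hy'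
    _ = r • z := by rw [map_sub, hgfx, sub_zero, hy]

lemma mem_range_of_pow_smul_mem_range {X Y Z : Type*} [AddCommGroup X] [AddCommGroup Y]
    [AddCommGroup Z] [Module R X] [Module R Y] [Module R Z] {f : X →ₗ[R] Y} {g : Y →ₗ[R] Z} {r : R}
    (hr : IsSMulRegular Z r) (hgf : g ∘ₗ f = 0)
    (hex : Function.Exact (QuotSMulTop.map r f) (QuotSMulTop.map r g)) {n : ℕ}
    {z : Z} (hz : r ^ n • z ∈ range g) : z ∈ range g := by
  induction n with
  | zero => simpa only [pow_zero, one_smul] using hz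
  | succ n ih =>
    rw [pow_succ', mul_smul] at hz
    exact ih (mem_range_of_smul_mem_range hr hgf hex hz)

/-- The hypotheses of the acyclicity criterion: `(F, d)` is a complex, and the sequence `rs` is
weakly regular on every `F k` and consists of elements acting nilpotently up to homotopy. -/
structure IsHomotopyRegular (d : ∀ k, F (k + 1) →ₗ[R] F k) (rs : List R) : Prop where
  d_comp_d (k : ℕ) : d k ∘ₗ d (k + 1) = 0
  isWeaklyRegular (k : ℕ) : IsWeaklyRegular (F k) rs
  mem_radical {r : R} (hr : r ∈ rs) : r ∈ (nullHomotopyIdeal d).radical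

namespace IsHomotopyRegular

variable {r : R} {rs : List R}

lemma isSMulRegular (hd : IsHomotopyRegular d (r :: rs)) (k : ℕ) : IsSMulRegular (F k) r :=
  ((isWeaklyRegular_cons_iff _ _ _).1 (hd.isWeaklyRegular k)).1

lemma quotSMulTop (hd : IsHomotopyRegular d (r :: rs)) :
    IsHomotopyRegular (F := fun k ↦ QuotSMulTop r (F k)) (fun k ↦ QuotSMulTop.map r (d k)) rs where
  d_comp_d k := by rw [← QuotSMulTop.map_comp, hd.d_comp_d, map_zero]
  isWeaklyRegular k := ((isWeaklyRegular_cons_iff _ _ _).1 (hd.isWeaklyRegular k)).2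
  mem_radical hx := Ideal.radical_mono (nullHomotopyIdeal_le_quotSMulTop d r)
    (hd.mem_radical (List.mem_cons_of_mem r hx))

/-- Acyclicity criterion: passing from `F` to `F ⧸ r F` trades one term of the regular sequence for
one degree, so the vanishing of `F` in high degrees propagates down to exactness in low degrees. -/
theorem exact (hd : IsHomotopyRegular d rs) (k : ℕ) (hF : Subsingleton (F (k + rs.length + 1))) :
    Function.Exact (d (k + 1)) (d k) := by
  induction rs generalizing F k with
  | nil => exact fun z ↦ ⟨fun _ ↦ ⟨0, hF.elim _ _⟩,
      fun _ ↦ (congrArg (d k) (hF.elim z 0)).trans (map_zero _)⟩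
  | cons r rs ih =>
    rw [List.length_cons, ← add_assoc, add_right_comm k] at hF
    have hquot : Function.Exact (QuotSMulTop.map r (d (k + 2))) (QuotSMulTop.map r (d (k + 1))) :=
      ih hd.quotSMulTop (k + 1) (Submodule.Quotient.mk_surjective _).subsingleton
    obtain ⟨n, hn⟩ := hd.mem_radical List.mem_cons_self
    refine fun z ↦ ⟨fun hz ↦ mem_range_of_pow_smul_mem_range (hd.isSMulRegular (k + 1))
      (hd.d_comp_d (k + 1)) hquot (smul_mem_range_of_mem_nullHomotopyIdeal hn hz), ?_⟩
    rintro ⟨w, rfl⟩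
    exact LinearMap.congr_fun (hd.d_comp_d k) w

theorem mem_range_of_pow_smul_mem_range (hd : IsHomotopyRegular d (r :: rs))
    (hF : Subsingleton (F (rs.length + 1))) {y : F 0} {n : ℕ} (hy : r ^ n • y ∈ range (d 0)) :
    y ∈ range (d 0) :=
  _root_.mem_range_of_pow_smul_mem_range (hd.isSMulRegular 0) (hd.d_comp_d 0)
    (hd.quotSMulTop.exact 0
      (by rw [zero_add]; exact (Submodule.Quotient.mk_surjective _).subsingleton)) hy

end IsHomotopyRegular

end Acyclicity

section ExteriorAlgebra

open ExteriorAlgebra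

variable {R M : Type*} [CommRing R] [AddCommGroup M] [Module R M]

/-- The interior product: the action of the exterior algebra of the dual module on the exterior
algebra, in which linear forms act by contraction. -/
noncomputable def interiorProduct :
    ExteriorAlgebra R (Module.Dual R M) →ₐ[R] Module.End R (ExteriorAlgebra R M) :=
  ExteriorAlgebra.lift R ⟨CliffordAlgebra.contractLeft (Q := 0), fun f ↦
    LinearMap.ext fun x ↦ CliffordAlgebra.contractLeft_contractLeft f x⟩

lemma interiorProduct_ι (f : Module.Dual R M) (x : ExteriorAlgebra R M) :
    interiorProduct (ι R f) x = CliffordAlgebra.contractLeft (Q := 0) f x := by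
  rw [interiorProduct, ExteriorAlgebra.lift_ι_apply]

lemma interiorProduct_ι_ι_mul (f : Module.Dual R M) (v : M) (x : ExteriorAlgebra R M) :
    interiorProduct (ι R f) (ι R v * x) = f v • x - ι R v * interiorProduct (ι R f) x := by
  simp only [interiorProduct_ι]
  exact CliffordAlgebra.contractLeft_ι_mul f v x

lemma interiorProduct_ι_ι (f : Module.Dual R M) (v : M) :
    interiorProduct (ι R f) (ι R v) = algebraMap R _ (f v) := by
  rw [interiorProduct_ι]
  exact CliffordAlgebra.contractLeft_ι 0 f v

lemma ι_mul_mem (v : M) {m : ℕ} {x : ExteriorAlgebra R M} (hx : x ∈ ⋀[R]^m M) :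
    ι R v * x ∈ ⋀[R]^(m + 1) M := by
  rw [exteriorPower, pow_succ']
  exact Submodule.mul_mem_mul (mem_range_self _ v) hx

lemma interiorProduct_ι_mem (f : Module.Dual R M) {m : ℕ} {x : ExteriorAlgebra R M}
    (hx : x ∈ ⋀[R]^(m + 1) M) : interiorProduct (ι R f) x ∈ ⋀[R]^m M := by
  induction m generalizing x with
  | zero =>
    rw [zero_add, exteriorPower, pow_one] at hx
    obtain ⟨v, rfl⟩ := hx
    rw [interiorProduct_ι_ι]
    exact SetLike.algebraMap_mem_graded (fun i : ℕ ↦ ⋀[R]^i M) (f v)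
  | succ m ih =>
    rw [exteriorPower, pow_succ'] at hx
    induction hx using Submodule.mul_induction_on' with
    | mem_mul_mem u hu x hx =>
      obtain ⟨v, rfl⟩ := hu
      rw [interiorProduct_ι_ι_mul]
      exact sub_mem (Submodule.smul_mem _ _ hx) (ι_mul_mem v (ih hx))
    | add x _ y _ hx hy => simpa only [map_add] using add_mem hx hy

lemma interiorProduct_mem {p m : ℕ} {η : ExteriorAlgebra R (Module.Dual R M)}
    (hη : η ∈ ⋀[R]^p (Module.Dual R M)) {x : ExteriorAlgebra R M} (hx : x ∈ ⋀[R]^(p + m) M) :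
    interiorProduct η x ∈ ⋀[R]^m M := by
  induction hη using Submodule.pow_induction_on_left' generalizing m with
  | algebraMap r =>
    rw [zero_add] at hx
    rw [AlgHom.commutes, Module.algebraMap_end_apply]
    exact Submodule.smul_mem _ r hx
  | add _ _ _ _ _ hη hη' =>
    rw [map_add]
    exact add_mem (hη hx) (hη' hx)
  | mem_mul u hu _ _ _ ih =>
    obtain ⟨f, rfl⟩ := hu
    rw [map_mul]
    exact interiorProduct_ι_mem f (ih (by rwa [Nat.succ_add_eq_add_succ] at hx))

lemma list_prod_mul_list_prod_reverse {A ι : Type*} [Ring A] {a b : ι → A} {l : List ι}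
    (hl : l.Nodup) (hab : ∀ i j, i ≠ j → a i * b j = -(b j * a i))
    (hbb : ∀ i j, i ≠ j → b i * b j = -(b j * b i)) :
    (l.map a).prod * (l.reverse.map b).prod = (l.map fun i ↦ a i * b i).prod := by
  induction l with
  | nil => simp
  | cons i l ih =>
    obtain ⟨hi, hl⟩ := List.nodup_cons.1 hl
    have hcomm : Commute (b i) (l.map fun i ↦ a i * b i).prod := by
      refine Commute.list_prod_right _ _ fun x hx ↦ ?_
      obtain ⟨j, hj, rfl⟩ := List.mem_map.1 hx
      have hij : j ≠ i := fun h ↦ hi (h ▸ hj)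
      calc b i * (a j * b j) = -(a j * b i) * b j := by rw [hab j i hij, neg_neg, mul_assoc]
        _ = a j * -(b i * b j) := by rw [neg_mul, mul_neg, mul_assoc]
        _ = a j * b j * b i := by rw [← hbb j i hij, mul_assoc]
    calc ((i :: l).map a).prod * ((i :: l).reverse.map b).prod
        = a i * ((l.map a).prod * (l.reverse.map b).prod) * b i := by simp [mul_assoc]
      _ = a i * b i * (l.map fun i ↦ a i * b i).prod := by
        rw [ih hl, mul_assoc, ← hcomm.eq, mul_assoc]
      _ = ((i :: l).map fun i ↦ a i * b i).prod := by simp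

section AnnihilatingPairs

variable {t : ℕ} {f : Fin t → Module.Dual R M} {v : Fin t → M} {Δ : R}

lemma ι_mul_ι_eq_neg (u v : M) : ι R u * ι R v = -(ι R v * ι R u) :=
  eq_neg_of_add_eq_zero_left (ExteriorAlgebra.ι_add_mul_swap u v)

lemma ιMulti_mul_ι_eq_zero (f : Fin t → M) (i : Fin t) : ιMulti R t f * ι R (f i) = 0 := by
  have h : ιMulti R (t + 1) (Fin.snoc f (f i)) = ιMulti R t f * ι R (f i) := by
    rw [ιMulti_apply, ιMulti_apply, List.ofFn_succ']
    simp
  rw [← h]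
  exact AlternatingMap.map_eq_zero_of_eq _ _ (by simp) (Fin.castSucc_lt_last i).ne

lemma interiorProduct_ι_mul_lmul (f : Module.Dual R M) (v : M) :
    interiorProduct (ι R f) * Algebra.lmul R _ (ι R v) =
      f v • 1 - Algebra.lmul R _ (ι R v) * interiorProduct (ι R f) :=
  LinearMap.ext fun x ↦ interiorProduct_ι_ι_mul f v x

lemma interiorProduct_ιMulti (f : Fin t → Module.Dual R M) :
    interiorProduct (ιMulti R t f) =
      ((List.finRange t).map fun i ↦ interiorProduct (ι R (f i))).prod := by
  rw [ιMulti_apply, map_list_prod, List.ofFn_eq_map, List.map_map]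
  rfl

lemma lmul_ιMulti_rev (v : Fin t → M) : Algebra.lmul R _ (ιMulti R t (v ∘ Fin.rev)) =
    ((List.finRange t).reverse.map fun i ↦ Algebra.lmul R _ (ι R (v i))).prod := by
  rw [ιMulti_apply, map_list_prod, List.ofFn_eq_map, List.finRange_reverse, List.map_map,
    List.map_map]
  rfl

lemma lmul_ιMulti_rev_mul_interiorProduct (hv : ∀ i j, i ≠ j → f i (v j) = 0) :
    Algebra.lmul R _ (ιMulti R t (v ∘ Fin.rev)) * interiorProduct (ιMulti R t f) =
      ((List.finRange t).reverse.map fun i ↦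
        Algebra.lmul R _ (ι R (v i)) * interiorProduct (ι R (f i))).prod := by
  rw [lmul_ιMulti_rev, interiorProduct_ιMulti, ← list_prod_mul_list_prod_reverse
    (List.nodup_reverse.2 (List.nodup_finRange t)), List.reverse_reverse]
  · intro i j hij
    rw [interiorProduct_ι_mul_lmul, hv j i hij.symm, zero_smul, zero_sub, neg_neg]
  · intro i j _
    rw [← map_mul, ι_mul_ι_eq_neg, map_neg, map_mul]

lemma interiorProduct_ιMulti_ιMulti_rev_mul (hv : ∀ i j, f i (v j) = if i = j then Δ else 0)
    {x : ExteriorAlgebra R M} (hx : ∀ i, interiorProduct (ι R (f i)) x = 0) :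
    interiorProduct (ιMulti R t f) (ιMulti R t (v ∘ Fin.rev) * x) = Δ ^ t • x := by
  have hprod : interiorProduct (ιMulti R t f) * Algebra.lmul R _ (ιMulti R t (v ∘ Fin.rev)) =
      ((List.finRange t).map fun i ↦
        interiorProduct (ι R (f i)) * Algebra.lmul R _ (ι R (v i))).prod := by
    rw [lmul_ιMulti_rev, interiorProduct_ιMulti, ← list_prod_mul_list_prod_reverse
      (List.nodup_finRange t)]
    · intro i j hij
      rw [interiorProduct_ι_mul_lmul, hv, if_neg hij, zero_smul, zero_sub]
    · intro i j _
      rw [← map_mul, ι_mul_ι_eq_neg, map_neg, map_mul]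
  have hfactor (i) : (interiorProduct (ι R (f i)) * Algebra.lmul R _ (ι R (v i))) x = Δ • x := by
    rw [interiorProduct_ι_mul_lmul, hv, if_pos rfl, LinearMap.sub_apply, Module.End.mul_apply, hx,
      map_zero,
      sub_zero, LinearMap.smul_apply, Module.End.one_apply]
  have hlist (l : List (Fin t)) : (l.map fun i ↦
      interiorProduct (ι R (f i)) * Algebra.lmul R _ (ι R (v i))).prod x = Δ ^ l.length • x := by
    induction l with
    | nil => simp
    | cons i l ih => rw [List.map_cons, List.prod_cons, Module.End.mul_apply, ih, map_smul,
        hfactor, smul_smul, List.length_cons, pow_succ]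
  have := LinearMap.congr_fun hprod x
  rwa [hlist, List.length_finRange] at this

end AnnihilatingPairs

end ExteriorAlgebra

section BuchsbaumRim

open ExteriorAlgebra

variable {R M : Type*} [CommRing R] [AddCommGroup M] [Module R M] {t : ℕ}

/-- The exterior degree of the `k`-th term of the Buchsbaum–Rim complex. -/
def buchsbaumRimDegree (t : ℕ) : ℕ → ℕ
  | 0 => 1
  | k + 1 => t + 1 + k

variable (R M t) in
/-- The terms `⋯ → D₁ ⊗ ⋀^(t + 2) M → D₀ ⊗ ⋀^(t + 1) M → M` of the Buchsbaum–Rim complex, where `D`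
is the divided power algebra of `R^t`. An element of `D_k ⊗ ⋀^m M` is encoded by its coefficients
with respect to the basis of `D_k` indexed by the multisets of size `k` in `Fin t`; for `k = 0` the
truncation in `k - 1` makes `M` appear as the family of its elements indexed by the empty
multiset. -/
abbrev BuchsbaumRim (k : ℕ) : Type _ :=
  Sym (Fin t) (k - 1) → ⋀[R]^(buchsbaumRimDegree t k) M

/-- The differential of the Buchsbaum–Rim complex of linear forms `f₁, …, f_t`: contraction with
`f₁ ∧ ⋯ ∧ f_t` in degree `0`, and the Koszul-type differential `∑ i, X_i ⌟ · ⊗ f_i ⌟ ·` above. -/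
noncomputable def buchsbaumRimD (f : Fin t → Module.Dual R M) :
    ∀ k, BuchsbaumRim R M t (k + 1) →ₗ[R] BuchsbaumRim R M t k
  | 0 => ((interiorProduct (ιMulti R t f)).restrict fun _ hx ↦
      interiorProduct_mem (ExteriorAlgebra.ιMulti_range R t ⟨f, rfl⟩) hx).compLeft _
  | k + 1 => ∑ i, ((interiorProduct (ι R (f i))).restrict fun _ hx ↦
      interiorProduct_ι_mem (f i) hx).compLeft _ ∘ₗ funLeft R _ (Sym.cons (n := k) i)

/-- The homotopy `X_i · ⊗ (v ∧ ·)` on the Buchsbaum–Rim complex, in positive degrees. -/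
noncomputable def buchsbaumRimHomotopy (i : Fin t) (v : M) :
    ∀ k, BuchsbaumRim R M t k →ₗ[R] BuchsbaumRim R M t (k + 1)
  | 0 => 0
  | k + 1 => LinearMap.pi fun s : Sym (Fin t) (k + 1) ↦ if hs : i ∈ s then
      (Algebra.lmul R _ (ι R v)).restrict (fun _ hx ↦ ι_mul_mem v hx) ∘ₗ proj (s.erase i hs) else 0

lemma coe_buchsbaumRimD_zero (f : Fin t → Module.Dual R M) (z : BuchsbaumRim R M t 1)
    (s : Sym (Fin t) 0) :
    (buchsbaumRimD f 0 z s : ExteriorAlgebra R M) =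
      interiorProduct (ιMulti R t f) (z s : ExteriorAlgebra R M) :=
  rfl

lemma coe_buchsbaumRimD_succ (f : Fin t → Module.Dual R M) {k : ℕ} (z : BuchsbaumRim R M t (k + 2))
    (s : Sym (Fin t) k) :
    (buchsbaumRimD f (k + 1) z s : ExteriorAlgebra R M) =
      ∑ i, interiorProduct (ι R (f i)) (z (i ::ₛ s) : ExteriorAlgebra R M) := by
  have h : buchsbaumRimD f (k + 1) z s = ∑ i, (interiorProduct (ι R (f i))).restrict
      (fun _ hx ↦ interiorProduct_ι_mem (f i) hx) (z (i ::ₛ s)) := by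
    rw [buchsbaumRimD, LinearMap.sum_apply, Finset.sum_apply]
    rfl
  rw [h, Submodule.coe_sum]
  rfl

lemma buchsbaumRimHomotopy_of_notMem {i : Fin t} (v : M) {k : ℕ} (z : BuchsbaumRim R M t k)
    {s : Sym (Fin t) k} (hs : i ∉ s) : buchsbaumRimHomotopy i v k z s = 0 := by
  cases k with
  | zero => rfl
  | succ k => rw [buchsbaumRimHomotopy, LinearMap.pi_apply, dif_neg hs, LinearMap.zero_apply]

lemma coe_buchsbaumRimHomotopy_cons (i : Fin t) (v : M) {k : ℕ} (z : BuchsbaumRim R M t (k + 1))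
    (s : Sym (Fin t) k) :
    (buchsbaumRimHomotopy i v (k + 1) z (i ::ₛ s) : ExteriorAlgebra R M) =
      ι R v * (z s : ExteriorAlgebra R M) := by
  have h : buchsbaumRimHomotopy i v (k + 1) z (i ::ₛ s) =
      (Algebra.lmul R _ (ι R v)).restrict (fun _ hx ↦ ι_mul_mem v hx)
        (z ((i ::ₛ s).erase i (Sym.mem_cons_self i s))) := by
    rw [buchsbaumRimHomotopy, LinearMap.pi_apply, dif_pos (Sym.mem_cons_self i s)]
    rfl
  rw [h, Sym.erase_cons_head]
  rfl

lemma buchsbaumRimD_comp_buchsbaumRimD (f : Fin t → Module.Dual R M) (k : ℕ) :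
    buchsbaumRimD f k ∘ₗ buchsbaumRimD f (k + 1) = 0 := by
  refine LinearMap.ext fun z ↦ funext fun s ↦ Subtype.ext ?_
  rw [comp_apply]
  cases k with
  | zero =>
    rw [coe_buchsbaumRimD_zero, coe_buchsbaumRimD_succ, map_sum]
    refine Finset.sum_eq_zero fun i _ ↦ ?_
    rw [← Module.End.mul_apply, ← map_mul, ιMulti_mul_ι_eq_zero, map_zero, LinearMap.zero_apply]
  | succ k =>
    simp only [coe_buchsbaumRimD_succ, map_sum, ← Module.End.mul_apply, ← map_mul]
    rw [← Finset.sum_product']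
    refine Finset.sum_involution (fun p _ ↦ p.swap) (fun p _ ↦ ?_) (fun p _ hp h ↦ hp ?_)
      (fun _ _ ↦ Finset.mem_univ _) fun p _ ↦ p.swap_swap
    · rw [Prod.fst_swap, Prod.snd_swap, ι_mul_ι_eq_neg, map_neg, LinearMap.neg_apply, Sym.cons_swap,
        neg_add_cancel]
    · rw [← (Prod.ext_iff.1 h).1, Prod.fst_swap, ExteriorAlgebra.ι_sq_zero, map_zero,
        LinearMap.zero_apply]

variable {f : Fin t → Module.Dual R M} {v : Fin t → M} {Δ : R}

lemma homotopyDefect_apply_of_mem (hv : ∀ i j, f i (v j) = if i = j then Δ else 0) {i : Fin t}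
    {k : ℕ} (z : BuchsbaumRim R M t (k + 1)) {s : Sym (Fin t) k} (hs : i ∈ s) :
    homotopyDefect (buchsbaumRimD f) (buchsbaumRimHomotopy i (v i)) Δ (k + 1) z s = 0 := by
  cases k with
  | zero => exact absurd (Subsingleton.elim s Sym.nil ▸ hs) (Sym.notMem_nil i)
  | succ k =>
    obtain ⟨s, rfl⟩ := Sym.exists_cons_of_mem hs
    have hterm (j) : interiorProduct (ι R (f j))
        (buchsbaumRimHomotopy i (v i) (k + 2) z (j ::ₛ i ::ₛ s) : ExteriorAlgebra R M) =
        (if j = i then Δ • (z (j ::ₛ s) : ExteriorAlgebra R M) else 0) -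
          ι R (v i) * interiorProduct (ι R (f j)) (z (j ::ₛ s) : ExteriorAlgebra R M) := by
      rw [Sym.cons_swap, coe_buchsbaumRimHomotopy_cons, interiorProduct_ι_ι_mul, hv, ite_smul,
        zero_smul]
    refine Subtype.ext ?_
    calc _ = Δ • (z (i ::ₛ s) : ExteriorAlgebra R M) -
          ((buchsbaumRimD f (k + 2) (buchsbaumRimHomotopy i (v i) (k + 2) z) (i ::ₛ s) :
            ExteriorAlgebra R M) +
          buchsbaumRimHomotopy i (v i) (k + 1) (buchsbaumRimD f (k + 1) z) (i ::ₛ s)) := rfl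
      _ = 0 := by
        rw [coe_buchsbaumRimD_succ, coe_buchsbaumRimHomotopy_cons, coe_buchsbaumRimD_succ,
          Finset.sum_congr rfl fun j _ ↦ hterm j, Finset.sum_sub_distrib, Finset.mul_sum,
          sub_add_cancel, Finset.sum_ite_eq' Finset.univ, if_pos (Finset.mem_univ i), sub_self]

lemma coe_homotopyDefect_of_notMem (hv : ∀ i j, f i (v j) = if i = j then Δ else 0) {i : Fin t}
    {k : ℕ} (z : BuchsbaumRim R M t (k + 1)) {s : Sym (Fin t) k} (hs : i ∉ s) :
    (homotopyDefect (buchsbaumRimD f) (buchsbaumRimHomotopy i (v i)) Δ (k + 1) z s :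
      ExteriorAlgebra R M) =
      ι R (v i) * interiorProduct (ι R (f i)) (z s : ExteriorAlgebra R M) := by
  have hterm (j) (hj : j ≠ i) : buchsbaumRimHomotopy i (v i) (k + 1) z (j ::ₛ s) = 0 :=
    buchsbaumRimHomotopy_of_notMem _ z fun h ↦ (Sym.mem_cons.1 h).elim hj.symm hs
  calc _ = Δ • (z s : ExteriorAlgebra R M) -
        ((buchsbaumRimD f (k + 1) (buchsbaumRimHomotopy i (v i) (k + 1) z) s :
            ExteriorAlgebra R M) +
          buchsbaumRimHomotopy i (v i) k (buchsbaumRimD f k z) s) := rfl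
    _ = _ := by
      rw [buchsbaumRimHomotopy_of_notMem _ _ hs, coe_buchsbaumRimD_succ,
        Finset.sum_eq_single i (fun j _ hj ↦ by rw [hterm j hj, ZeroMemClass.coe_zero, map_zero])
          (fun h ↦ absurd (Finset.mem_univ i) h), coe_buchsbaumRimHomotopy_cons,
        interiorProduct_ι_ι_mul, hv, if_pos rfl, ZeroMemClass.coe_zero, add_zero, sub_sub_cancel]

lemma prod_homotopyDefect_apply_of_mem (hv : ∀ i j, f i (v j) = if i = j then Δ else 0)
    {l : List (Fin t)} {i : Fin t} (hi : i ∈ l) {k : ℕ} (z : BuchsbaumRim R M t (k + 1))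
    {s : Sym (Fin t) k} (hs : i ∈ s) :
    (l.map fun i ↦ homotopyDefect (buchsbaumRimD f) (buchsbaumRimHomotopy i (v i)) Δ).prod (k + 1)
      z s = 0 := by
  induction l with
  | nil => exact absurd hi List.not_mem_nil
  | cons j l ih =>
    rw [List.map_cons, List.prod_cons, Pi.mul_apply, Module.End.mul_apply]
    by_cases hj : j ∈ s
    · exact homotopyDefect_apply_of_mem hv _ hj
    · have hil : i ∈ l := (List.mem_cons.1 hi).resolve_left fun h ↦ hj (h ▸ hs)
      refine Subtype.ext ?_
      rw [coe_homotopyDefect_of_notMem hv _ hj, ih hil, ZeroMemClass.coe_zero, map_zero, mul_zero]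

lemma coe_prod_homotopyDefect (hv : ∀ i j, f i (v j) = if i = j then Δ else 0)
    (l : List (Fin t)) {k : ℕ} (z : BuchsbaumRim R M t (k + 1)) {s : Sym (Fin t) k}
    (hs : ∀ i, i ∉ s) :
    ((l.map fun i ↦ homotopyDefect (buchsbaumRimD f) (buchsbaumRimHomotopy i (v i)) Δ).prod (k + 1)
      z s : ExteriorAlgebra R M) =
      (l.map fun i ↦ Algebra.lmul R _ (ι R (v i)) * interiorProduct (ι R (f i))).prod
        (z s : ExteriorAlgebra R M) := by
  induction l with
  | nil => rfl
  | cons i l ih =>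
    rw [List.map_cons, List.prod_cons, Pi.mul_apply, Module.End.mul_apply,
      coe_homotopyDefect_of_notMem hv _ (hs i), ih, List.map_cons, List.prod_cons]
    rfl

/-- The homotopy `v_t ∧ ⋯ ∧ v₁ ∧ ·` from degree `0` to degree `1`, extended by zero. -/
noncomputable def buchsbaumRimHomotopyZero (v : Fin t → M) :
    ∀ k, BuchsbaumRim R M t k →ₗ[R] BuchsbaumRim R M t (k + 1)
  | 0 => ((Algebra.lmul R _ (ιMulti R t (v ∘ Fin.rev))).restrict fun _ hx ↦
      SetLike.mul_mem_graded (ExteriorAlgebra.ιMulti_range R t ⟨_, rfl⟩) hx).compLeft _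
  | _ + 1 => 0

lemma pow_mem_nullHomotopyIdeal (hv : ∀ i j, f i (v j) = if i = j then Δ else 0) :
    Δ ^ t ∈ nullHomotopyIdeal (buchsbaumRimD f) := by
  set P := ((List.finRange t).reverse.map fun i ↦
    homotopyDefect (buchsbaumRimD f) (buchsbaumRimHomotopy i (v i)) Δ).prod with hP
  have hsub : NullHomotopic (buchsbaumRimD f) (Δ ^ t • 1 - P) := by
    simpa [hP] using nullHomotopic_pow_sub_prod_homotopyDefect (buchsbaumRimD_comp_buchsbaumRimD f)
      (fun i ↦ buchsbaumRimHomotopy i (v i)) Δ (List.finRange t).reverse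
  have hprod : NullHomotopic (buchsbaumRimD f) P := by
    refine ⟨buchsbaumRimHomotopyZero v, fun k ↦ LinearMap.ext fun z ↦ funext fun s ↦ ?_⟩
    cases k with
    | zero =>
      have hs (i : Fin t) : i ∉ s :=
        Subsingleton.elim (α := Sym (Fin t) 0) Sym.nil s ▸ Sym.notMem_nil i
      have hhomotopy : (buchsbaumRimD f 1 ∘ₗ buchsbaumRimHomotopyZero v 1 +
          buchsbaumRimHomotopyZero v 0 ∘ₗ buchsbaumRimD f 0) z s =
          buchsbaumRimHomotopyZero v 0 (buchsbaumRimD f 0 z) s := by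
        rw [show buchsbaumRimHomotopyZero v 1 = (0 : _ →ₗ[R] _) from rfl, comp_zero, zero_add,
          comp_apply]
      rw [hhomotopy]
      refine Subtype.ext ((coe_prod_homotopyDefect hv _ z hs).trans ?_)
      rw [← lmul_ιMulti_rev_mul_interiorProduct fun i j hij ↦ by rw [hv, if_neg hij]]
      rfl
    | succ k =>
      obtain ⟨i, s, rfl⟩ := Sym.exists_eq_cons_of_succ s
      refine (prod_homotopyDefect_apply_of_mem hv
        (List.mem_reverse.2 (List.mem_finRange i)) z (Sym.mem_cons_self i s)).trans ?_
      rw [buchsbaumRimHomotopyZero, buchsbaumRimHomotopyZero, comp_zero, zero_comp, add_zero]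
      rfl
  simpa [nullHomotopyIdeal] using hsub.add hprod

end BuchsbaumRim

section BuchsbaumRimExact

open RingTheory.Sequence ExteriorAlgebra

variable {R M : Type*} [CommRing R] [AddCommGroup M] [Module R M] {t : ℕ}

/-- The ideal of maximal minors of a linear map `M → R^t` with components `f₁, …, f_t`. -/
def minorIdeal (f : Fin t → Module.Dual R M) : Ideal R :=
  Ideal.span (Set.range fun u : Fin t → M ↦ (Matrix.of fun i j ↦ f i (u j)).det)

lemma exists_apply_eq_ite_det (f : Fin t → Module.Dual R M) (u : Fin t → M) :
    ∃ v : Fin t → M, ∀ i j, f i (v j) =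
      if i = j then (Matrix.of fun i j ↦ f i (u j)).det else 0 := by
  refine ⟨fun j ↦ ∑ l, (Matrix.of fun i j ↦ f i (u j)).adjugate l j • u l, fun i j ↦ ?_⟩
  calc _ = ((Matrix.of fun i j ↦ f i (u j)) * (Matrix.of fun i j ↦ f i (u j)).adjugate) i j := by
        simp [Matrix.mul_apply, mul_comm]
    _ = _ := by rw [Matrix.mul_adjugate, Matrix.smul_apply, Matrix.one_apply, smul_eq_mul, mul_ite,
        mul_one, mul_zero]

lemma minorIdeal_le_radical_nullHomotopyIdeal (f : Fin t → Module.Dual R M) :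
    minorIdeal f ≤ (nullHomotopyIdeal (buchsbaumRimD f)).radical := by
  refine Ideal.span_le.2 ?_
  rintro _ ⟨u, rfl⟩
  obtain ⟨v, hv⟩ := exists_apply_eq_ite_det f u
  exact ⟨t, pow_mem_nullHomotopyIdeal hv⟩

lemma minorIdeal_le_radical_comap_range (f : Fin t → Module.Dual R M)
    {y : BuchsbaumRim R M t 0}
    (hy : ∀ i s, interiorProduct (ι R (f i)) (y s : ExteriorAlgebra R M) = 0) :
    minorIdeal f ≤
      Ideal.radical ((range (buchsbaumRimD f 0)).comap (toSpanSingleton R _ y)) := by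
  refine Ideal.span_le.2 ?_
  rintro _ ⟨u, rfl⟩
  obtain ⟨v, hv⟩ := exists_apply_eq_ite_det f u
  exact ⟨t, buchsbaumRimHomotopyZero v 0 y, funext fun s ↦ Subtype.ext
    (interiorProduct_ιMulti_ιMulti_rev_mul hv fun i ↦ hy i s)⟩

lemma isWeaklyRegular_of_flat [Module.Flat R M] {rs : List R} (hrs : IsWeaklyRegular R rs) :
    IsWeaklyRegular M rs :=
  ((TensorProduct.rid R M).isWeaklyRegular_congr rs).1 (hrs.isWeaklyRegular_lTensor)

/-- Exactness of the Buchsbaum–Rim complex at its last term, by the acyclicity criterion. -/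
theorem exists_interiorProduct_ιMulti_eq_ι [Module.Free R M] {f : Fin t → Module.Dual R M}
    {rs : List R} (hnil : rs ≠ []) (hrs : IsWeaklyRegular R rs)
    (hmem : ∀ r ∈ rs, r ∈ minorIdeal f) (hM : Subsingleton (⋀[R]^(t + rs.length) M)) {y : M}
    (hy : ∀ i, f i y = 0) :
    ∃ u ∈ ⋀[R]^(t + 1) M, interiorProduct (ιMulti R t f) u = ι R y := by
  obtain ⟨r, rs, rfl⟩ := List.exists_cons_of_ne_nil hnil
  have hd : IsHomotopyRegular (buchsbaumRimD f) (r :: rs) :=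
    ⟨buchsbaumRimD_comp_buchsbaumRimD f, fun _ ↦ isWeaklyRegular_of_flat hrs,
      fun hr ↦ minorIdeal_le_radical_nullHomotopyIdeal f (hmem _ hr)⟩
  have hF : Subsingleton (BuchsbaumRim R M t (rs.length + 1)) := by
    have : Subsingleton (⋀[R]^(buchsbaumRimDegree t (rs.length + 1)) M) := by
      rwa [List.length_cons, ← add_assoc, add_right_comm] at hM
    infer_instance
  let y₀ : BuchsbaumRim R M t 0 := fun _ ↦ ⟨ι R y, by
    rw [buchsbaumRimDegree, exteriorPower, pow_one]; exact mem_range_self _ y⟩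
  obtain ⟨n, hn⟩ := minorIdeal_le_radical_comap_range f (y := y₀)
    (fun i _ ↦ by rw [interiorProduct_ι_ι, hy, map_zero]) (hmem r List.mem_cons_self)
  obtain ⟨z, hz⟩ := hd.mem_range_of_pow_smul_mem_range hF hn
  exact ⟨z Sym.nil, (z Sym.nil).2, congrArg Subtype.val (congrFun hz Sym.nil)⟩

end BuchsbaumRimExact

section MaximalMinors

open ExteriorAlgebra Matrix

variable {R : Type*} [CommRing R] {m : Type*} {t : ℕ}

/-- The ideal generated by the maximal minors of a matrix with `t` columns, that is, the
determinants of the submatrices formed by `t` distinct rows. -/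
def maximalMinorIdeal (A : Matrix m (Fin t) R) : Ideal R :=
  Ideal.span {d | ∃ g : Fin t → m, Function.Injective g ∧ d = (A.submatrix g _root_.id).det}

/-- The linear form `y ↦ ∑ j, y j * A j i` given by the `i`-th column of `A`. -/
def columnForm {κ : Type*} [Fintype m] (A : Matrix m κ R) (i : κ) : Module.Dual R (m → R) :=
  proj i ∘ₗ A.vecMulLinear

lemma columnForm_eq_sum {κ : Type*} [Fintype m] (A : Matrix m κ R) (i : κ) :
    columnForm A i = ∑ j, A j i • proj j := by
  refine LinearMap.ext fun y ↦ ?_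
  simp [columnForm, vecMul, dotProduct, mul_comm]

lemma maximalMinorIdeal_le_minorIdeal [Fintype m] (A : Matrix m (Fin t) R) :
    maximalMinorIdeal A ≤ minorIdeal (columnForm A) := by
  classical
  refine Ideal.span_le.2 ?_
  rintro _ ⟨g, -, rfl⟩
  refine Ideal.subset_span ⟨fun j ↦ Pi.single (g j) 1, ?_⟩
  rw [← det_transpose]
  refine congrArg det (Matrix.ext fun i j ↦ ?_)
  simp [columnForm]

theorem alternatingMap_sum_smul_mem [Fintype m] [LinearOrder m] {N P : Type*} [AddCommGroup N]
    [Module R N] [AddCommGroup P] [Module R P] (φ : N [⋀^Fin t]→ₗ[R] P) (A : Matrix m (Fin t) R)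
    (w : m → N) :
    φ (fun i ↦ ∑ j, A j i • w j) ∈ maximalMinorIdeal A • (⊤ : Submodule R P) := by
  set b := (Pi.basisFun R m).exteriorPower t
  set Φ := exteriorPower.alternatingMapLinearEquiv (φ.compLinearMap (Fintype.linearCombination R w))
  have hΦ : φ (fun i ↦ ∑ j, A j i • w j) = Φ (exteriorPower.ιMulti R t A.col) := by
    rw [exteriorPower.alternatingMapLinearEquiv_apply_ιMulti]
    rfl
  rw [hΦ, ← b.sum_repr (exteriorPower.ιMulti R t A.col), map_sum]
  refine Submodule.sum_mem _ fun σ _ ↦ ?_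
  rw [map_smul]
  refine Submodule.smul_mem_smul (Ideal.subset_span ?_) Submodule.mem_top
  refine ⟨Set.powersetCard.ofFinEmbEquiv.symm σ,
    (Set.powersetCard.ofFinEmbEquiv.symm σ).injective, ?_⟩
  rw [exteriorPower.basis_repr_apply, exteriorPower.ιMultiDual_apply_ιMulti, ← det_transpose]
  rfl

lemma ι_mul_ιMulti_add_smul {M : Type*} [AddCommGroup M] [Module R M] (e : M) (x : Fin t → M)
    (c : Fin t → R) : ι R e * ιMulti R t (fun i ↦ x i + c i • e) = ι R e * ιMulti R t x := by
  induction t with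
  | zero => simp [ιMulti_apply]
  | succ t ih =>
    have hadd : ι R e * ι R (x 0 + c 0 • e) = -(ι R (x 0) * ι R e) := by
      rw [map_add, map_smul, mul_add, mul_smul_comm, ι_sq_zero, smul_zero, add_zero, ι_mul_ι_eq_neg]
    have htail : Matrix.vecTail (fun i ↦ x i + c i • e) =
      fun i ↦ Matrix.vecTail x i + Matrix.vecTail c i • e := rfl
    rw [ιMulti_succ_apply, ιMulti_succ_apply, ← mul_assoc, hadd, htail, neg_mul, mul_assoc, ih,
      ← mul_assoc, ← neg_mul, ← ι_mul_ι_eq_neg, mul_assoc]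

variable {s : ℕ}

/-- Wedging with the last coordinate form `e` kills the last row of `A`, so `e` applied to a
contraction with the wedge of the columns only involves minors of the other rows. -/
theorem apply_last_mem_maximalMinorIdeal {A : Matrix (Fin (s + 1)) (Fin t) R}
    {u : ExteriorAlgebra R (Fin (s + 1) → R)} {y : Fin (s + 1) → R}
    (hu : interiorProduct (ιMulti R t (columnForm A)) u = ι R y) :
    y (Fin.last s) ∈ maximalMinorIdeal (A.submatrix Fin.castSucc _root_.id) := by
  set e : Module.Dual R (Fin (s + 1) → R) := proj (Fin.last s)
  set f : Fin t → Module.Dual R (Fin (s + 1) → R) := fun i ↦ ∑ j, A (Fin.castSucc j) i •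
    proj (Fin.castSucc j)
  have hf : columnForm A = fun i ↦ f i + A (Fin.last s) i • e :=
    funext fun i ↦ by rw [columnForm_eq_sum, Fin.sum_univ_castSucc]
  set φ : Module.Dual R (Fin (s + 1) → R) [⋀^Fin t]→ₗ[R] R :=
    (algebraMapInv.toLinearMap ∘ₗ (interiorProduct (R := R).toLinearMap.flip u) ∘ₗ
      Algebra.lmul R _ (ι R e)).compAlternatingMap (ιMulti R t)
  have hφ : φ f = y (Fin.last s) := by
    calc φ f = algebraMapInv (interiorProduct (ι R e * ιMulti R t f) u) := rfl
      _ = algebraMapInv (interiorProduct (ι R e * ιMulti R t (columnForm A)) u) := by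
        rw [hf, ι_mul_ιMulti_add_smul]
      _ = algebraMapInv (algebraMap R (ExteriorAlgebra R (Fin (s + 1) → R)) (e y)) := by
        rw [map_mul, Module.End.mul_apply, hu, interiorProduct_ι_ι]
      _ = y (Fin.last s) := algebraMap_leftInverse _ _
  rw [← hφ, ← Ideal.mul_top (maximalMinorIdeal _), ← smul_eq_mul]
  exact alternatingMap_sum_smul_mem φ (A.submatrix Fin.castSucc _root_.id) fun j ↦ proj j.castSucc

theorem exists_vecMul_eq_zero_apply_last (A : Matrix (Fin (s + 1)) (Fin t) R) (g : Fin t → Fin s) :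
    ∃ y : Fin (s + 1) → R, y ᵥ* A = 0 ∧
      y (Fin.last s) = ((A.submatrix Fin.castSucc _root_.id).submatrix g _root_.id).det := by
  set N := (A.submatrix Fin.castSucc _root_.id).submatrix g _root_.id with hN
  set w := A (Fin.last s) ᵥ* N.adjugate
  refine ⟨N.det • Pi.single (Fin.last s) 1 - ∑ j, w j • Pi.single (g j).castSucc 1, ?_, ?_⟩
  · have hw : (∑ j, w j • Pi.single (g j).castSucc 1 : Fin (s + 1) → R) ᵥ* A = w ᵥ* N := by
      simp only [sum_vecMul, smul_vecMul, single_one_vecMul]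
      exact (vecMul_eq_sum w N).symm
    rw [sub_vecMul, hw, smul_vecMul, single_one_vecMul, vecMul_vecMul, adjugate_mul, vecMul_smul,
      vecMul_one, sub_eq_zero]
    rfl
  · simp [hN]

end MaximalMinors

section HomCoker

open RingTheory.Sequence ExteriorAlgebra Matrix

variable {R : Type*} [CommRing R] {s t : ℕ}

lemma subsingleton_exteriorPower_of_card_lt {m : Type*} [Fintype m] {k : ℕ}
    (hk : Fintype.card m < k) : Subsingleton (⋀[R]^k (m → R)) := by
  classical
  have : LinearOrder m := LinearOrder.lift' _ (Fintype.equivFin m).injective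
  have : IsEmpty (Set.powersetCard m k) :=
    ⟨fun σ ↦ hk.not_ge (σ.2.symm.trans_le (Finset.card_le_univ σ.1))⟩
  exact ((Pi.basisFun R m).exteriorPower k).repr.toEquiv.subsingleton

lemma apply_mkQ_single_mem_maximalMinorIdeal {A : Matrix (Fin (s + 1)) (Fin t) R} {rs : List R}
    (hnil : rs ≠ []) (hrs : IsWeaklyRegular R rs) (hmem : ∀ r ∈ rs, r ∈ maximalMinorIdeal A)
    (hlen : s + 1 < t + rs.length)
    (φ : ((Fin (s + 1) → R) ⧸ range A.toLin') →ₗ[R] R) :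
    φ ((range A.toLin').mkQ (Pi.single (Fin.last s) 1)) ∈
      maximalMinorIdeal (A.submatrix Fin.castSucc _root_.id) := by
  set y : Fin (s + 1) → R := fun j ↦ φ ((range A.toLin').mkQ (Pi.single j 1))
  have hy (i : Fin t) : columnForm A i y = 0 := by
    calc columnForm A i y = ∑ j, A j i * y j := by
          simp [columnForm_eq_sum]
      _ = φ ((range A.toLin').mkQ (A.toLin' (Pi.single i 1))) := by
          have hA : A.toLin' (Pi.single i 1) = ∑ j, A j i • Pi.single j 1 := by
            rw [toLin'_apply, mulVec_single_one]
            exact pi_eq_sum_univ' (A.col i)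
          simp only [hA, map_sum, map_smul, smul_eq_mul, y]
      _ = 0 := by
        rw [Submodule.mkQ_apply, (Submodule.Quotient.mk_eq_zero _).2 (mem_range_self _ _), map_zero]
  obtain ⟨u, -, hu⟩ := exists_interiorProduct_ιMulti_eq_ι hnil hrs
    (fun r hr ↦ maximalMinorIdeal_le_minorIdeal A (hmem r hr))
    (subsingleton_exteriorPower_of_card_lt (by rwa [Fintype.card_fin])) hy
  exact apply_last_mem_maximalMinorIdeal hu

lemma maximalMinorIdeal_le_range_applyₗ (A : Matrix (Fin (s + 1)) (Fin t) R) :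
    maximalMinorIdeal (A.submatrix Fin.castSucc _root_.id) ≤
      range (applyₗ ((range A.toLin').mkQ (Pi.single (Fin.last s) 1)) :
        (((Fin (s + 1) → R) ⧸ range A.toLin') →ₗ[R] R) →ₗ[R] R) := by
  refine Ideal.span_le.2 ?_
  rintro _ ⟨g, -, rfl⟩
  obtain ⟨y, hyA, hy⟩ := exists_vecMul_eq_zero_apply_last A g
  have hle : range A.toLin' ≤ ker (Fintype.linearCombination R y) := by
    rintro _ ⟨x, rfl⟩
    calc Fintype.linearCombination R y (A.toLin' x) = (A *ᵥ x) ⬝ᵥ y := rfl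
      _ = 0 := by rw [dotProduct_comm, dotProduct_mulVec, hyA, zero_dotProduct]
  exact ⟨(range A.toLin').liftQ _ hle, by simp [hy]⟩

variable {A : Matrix (Fin (s + 1)) (Fin t) R}
  {π : ((Fin (s + 1) → R) ⧸ range A.toLin') →ₗ[R]
    ((Fin s → R) ⧸ range (A.submatrix Fin.castSucc _root_.id).toLin')}
  (hπ : π ∘ₗ (range A.toLin').mkQ =
    (range (A.submatrix Fin.castSucc _root_.id).toLin').mkQ ∘ₗ funLeft R R Fin.castSucc)

include hπ

lemma surjective_of_comp_mkQ_eq : Function.Surjective π := by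
  have h : Function.Surjective (π ∘ₗ (range A.toLin').mkQ) := by
    rw [hπ]
    exact (Submodule.mkQ_surjective _).comp
      (funLeft_surjective_of_injective R R _ (Fin.castSucc_injective s))
  rw [coe_comp] at h
  exact h.of_comp

lemma exact_toSpanSingleton_of_comp_mkQ_eq :
    Function.Exact (toSpanSingleton R _ ((range A.toLin').mkQ (Pi.single (Fin.last s) 1))) π := by
  have hπ_apply (x : Fin (s + 1) → R) : π ((range A.toLin').mkQ x) =
      (range (A.submatrix Fin.castSucc _root_.id).toLin').mkQ (x ∘ Fin.castSucc) :=
    LinearMap.congr_fun hπ x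
  refine LinearMap.exact_of_comp_eq_zero_of_ker_le_range ?_ fun q hq ↦ ?_
  · ext
    have hzero : (Pi.single (Fin.last s) 1 : Fin (s + 1) → R) ∘ Fin.castSucc = 0 :=
      funext fun j ↦ Pi.single_eq_of_ne (Fin.castSucc_ne_last j) 1
    rw [LinearMap.comp_apply, toSpanSingleton_apply, one_smul, hπ_apply, hzero, map_zero,
      LinearMap.zero_apply]
  · obtain ⟨x, rfl⟩ := Submodule.mkQ_surjective _ q
    rw [mem_ker, hπ_apply, ← mem_ker, Submodule.ker_mkQ] at hq
    obtain ⟨z, hz⟩ := hq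
    have hz_apply (j : Fin s) : (A *ᵥ z) j.castSucc = x j.castSucc := congrFun hz j
    refine ⟨x (Fin.last s) - (A *ᵥ z) (Fin.last s), ?_⟩
    rw [toSpanSingleton_apply, ← map_smul, ← sub_eq_zero, ← map_sub, ← mem_ker, Submodule.ker_mkQ]
    refine ⟨-z, funext fun j ↦ ?_⟩
    cases j using Fin.lastCases <;> simp [mulVec_neg, hz_apply]

end HomCoker

section PolynomialRegularSequence

open Polynomial RingTheory.Sequence

variable {R S : Type*} [CommRing R] [CommRing S]

lemma degree_eval₂_X_pow_add_C_X_lt {f : R[X][X]} {m n : ℕ}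
    (hm : ∀ i, (f.coeff i).natDegree < m) (hn : f.degree < n) :
    (f.eval₂ (mapRingHom C) (X ^ m + C X : R[X][X])).degree < (m * n : ℕ) := by
  rw [eval₂_eq_sum, ← mem_degreeLT]
  refine Submodule.sum_mem _ fun i hi ↦ mem_degreeLT.2 ?_
  have hin : i + 1 ≤ n := by
    exact_mod_cast (le_degree_of_mem_supp i hi).trans_lt hn
  have hX : (X ^ m + C X : R[X][X]).natDegree ≤ m := by compute_degree
  have hdeg : (mapRingHom C (f.coeff i) * (X ^ m + C X : R[X][X]) ^ i).natDegree < m * n := by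
    calc _ ≤ (mapRingHom C (f.coeff i)).natDegree + ((X ^ m + C X : R[X][X]) ^ i).natDegree :=
          natDegree_mul_le
      _ ≤ (f.coeff i).natDegree + i * m :=
          add_le_add natDegree_map_le (natDegree_pow_le_of_le i hX)
      _ < m + i * m := Nat.add_lt_add_right (hm i) _
      _ = m * (i + 1) := by ring
      _ ≤ m * n := Nat.mul_le_mul_left m hin
  exact degree_le_natDegree.trans_lt (by exact_mod_cast hdeg)

lemma leadingCoeff_eval₂_X_pow_add_C_X {f : R[X][X]} {m : ℕ}
    (hm : ∀ i, (f.coeff i).natDegree < m) :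
    (f.eval₂ (mapRingHom C) (X ^ m + C X : R[X][X])).leadingCoeff =
      C f.leadingCoeff.leadingCoeff := by
  rcases eq_or_ne f 0 with rfl | hf
  · simp
  nontriviality R
  have hmonic : (X ^ m + C X : R[X][X]).Monic := monic_X_pow_add_C X (hm 0).ne_bot
  set q : R[X][X] := f.leadingCoeff.map C * (X ^ m + C X) ^ f.natDegree with hq
  have hlead : q.leadingCoeff = C f.leadingCoeff.leadingCoeff := by
    rw [hq, leadingCoeff_mul_monic (hmonic.pow _), leadingCoeff_map_of_injective C_injective]
  have hdeg : (m * f.natDegree : ℕ) ≤ q.degree := by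
    have hmap : f.leadingCoeff.map C ≠ 0 :=
      (Polynomial.map_ne_zero_iff C_injective).2 (leadingCoeff_ne_zero.2 hf)
    calc ((m * f.natDegree : ℕ) : WithBot ℕ) = ((X ^ m + C X : R[X][X]) ^ f.natDegree).degree := by
          rw [degree_eq_natDegree (hmonic.pow _).ne_zero, hmonic.natDegree_pow,
            natDegree_X_pow_add_C, mul_comm]
      _ ≤ q.degree := by
          rw [hq, (hmonic.pow _).degree_mul]
          exact le_add_of_nonneg_left (zero_le_degree_iff.2 hmap)
  have herase : f.eraseLead.degree < f.natDegree := by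
    rw [← degree_eq_natDegree hf]
    exact degree_eraseLead_lt hf
  have hcoeff (i : ℕ) : (f.eraseLead.coeff i).natDegree < m := by
    rw [eraseLead_coeff]
    split_ifs
    · simpa using (Nat.zero_le _).trans_lt (hm 0)
    · exact hm i
  have hf_eq : f.eval₂ (mapRingHom C) (X ^ m + C X : R[X][X]) =
      f.eraseLead.eval₂ (mapRingHom C) (X ^ m + C X) + q := by
    conv_lhs => rw [← f.eraseLead_add_C_mul_X_pow]
    rw [eval₂_add, eval₂_mul, eval₂_C, eval₂_pow, eval₂_X, coe_mapRingHom]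
  rw [hf_eq, leadingCoeff_add_of_degree_lt
    ((degree_eval₂_X_pow_add_C_X_lt hcoeff herase).trans_le hdeg), hlead]

lemma swap_algEquivAevalXAddC_X_pow (f : R[X][X]) (m : ℕ) :
    Bivariate.swap (algEquivAevalXAddC (X ^ m) f) =
      f.eval₂ (mapRingHom C) (X ^ m + C X : R[X][X]) := by
  induction f using Polynomial.induction_on' with
  | add p q hp hq => simp only [map_add, hp, hq, eval₂_add]
  | monomial n a =>
    rw [← C_mul_X_pow_eq_monomial]
    simp [algEquivAevalXAddC, Bivariate.swap_C, Bivariate.swap_Y, add_comm]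

lemma exists_ringEquiv_isUnit_leadingCoeff {f : R[X][X]} (hf : IsUnit f.leadingCoeff.leadingCoeff) :
    ∃ e : R[X][X] ≃+* R[X][X], IsUnit (e f).leadingCoeff := by
  obtain ⟨m, hm⟩ : ∃ m, ∀ i, (f.coeff i).natDegree < m := by
    refine ⟨f.support.sup (fun i ↦ (f.coeff i).natDegree) + 1, fun i ↦ Nat.lt_succ_of_le ?_⟩
    by_cases hi : i ∈ f.support
    · exact Finset.le_sup (f := fun i ↦ (f.coeff i).natDegree) hi
    · simp [notMem_support_iff.1 hi]
  -- Nagata's substitution, followed by an exchange of the two variables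
  refine ⟨(algEquivAevalXAddC (X ^ m)).toRingEquiv.trans Bivariate.swap.toRingEquiv, ?_⟩
  change IsUnit (Bivariate.swap (algEquivAevalXAddC (X ^ m) f)).leadingCoeff
  rw [swap_algEquivAevalXAddC_X_pow, leadingCoeff_eval₂_X_pow_add_C_X hm]
  exact hf.map C

lemma leadingCoeff_mapEquiv (e : R ≃+* S) (f : R[X]) :
    (mapEquiv e f).leadingCoeff = e f.leadingCoeff :=
  leadingCoeff_map_of_injective (f := (e : R →+* S)) e.injective f

theorem exists_ringEquiv_mvPolynomial_isUnit_leadingCoeff {k : Type*} [Field k] (N : ℕ)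
    {f : MvPolynomial (Fin (N + 1)) k} (hf : f ≠ 0) :
    ∃ e : MvPolynomial (Fin (N + 1)) k ≃+* (MvPolynomial (Fin N) k)[X],
      IsUnit (e f).leadingCoeff := by
  induction N with
  | zero =>
    refine ⟨(MvPolynomial.finSuccEquiv k 0).toRingEquiv, ?_⟩
    rw [← MulEquiv.isUnit_map (MvPolynomial.isEmptyRingEquiv k (Fin 0)), isUnit_iff_ne_zero]
    rwa [map_ne_zero_iff _ (RingEquiv.injective _), leadingCoeff_ne_zero,
      map_ne_zero_iff _ (RingEquiv.injective _)]
  | succ N ih =>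
    let F := MvPolynomial.finSuccEquiv k (N + 1) f
    have hF : F.leadingCoeff ≠ 0 := by simpa [F] using hf
    obtain ⟨e, he⟩ := ih hF
    rw [← leadingCoeff_mapEquiv] at he
    obtain ⟨e', he'⟩ := exists_ringEquiv_isUnit_leadingCoeff he
    refine ⟨(((MvPolynomial.finSuccEquiv k (N + 1)).toRingEquiv.trans (mapEquiv e)).trans e').trans
      (mapEquiv (MvPolynomial.finSuccEquiv k N).symm.toRingEquiv), ?_⟩
    change IsUnit (mapEquiv _ (e' (mapEquiv e F))).leadingCoeff
    rw [leadingCoeff_mapEquiv]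
    exact he'.map _

lemma ringKrullDim_le_of_isIntegral [Algebra R S] [Algebra.IsIntegral R S]
    (hinj : Function.Injective (algebraMap R S)) : ringKrullDim R ≤ ringKrullDim S := by
  refine iSup_le fun l ↦ ?_
  have hbot : (⊥ : Ideal S).comap (algebraMap R S) ≤ l.head.asIdeal := by
    rw [← RingHom.ker_eq_comap_bot, (RingHom.injective_iff_ker_eq_bot _).1 hinj]
    exact bot_le
  obtain ⟨Q, -, hQ, hQl⟩ := Ideal.exists_ideal_over_prime_of_isIntegral _ _ hbot
  have : Q.LiesOver l.head.asIdeal := ⟨hQl.symm⟩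
  obtain ⟨L, hL, -⟩ := Ideal.exists_ltSeries_of_hasGoingUp l Q
  rw [← hL]
  exact le_iSup (fun p : LTSeries (PrimeSpectrum S) ↦ ((p.length : ℕ∞) : WithBot ℕ∞)) L

lemma ringKrullDim_quotient_comap_C_le {I : Ideal R[X]} {f : R[X]} (hf : f.Monic)
    (hfI : f ∈ I) : ringKrullDim (R ⧸ I.comap C) ≤ ringKrullDim (R[X] ⧸ I) := by
  have : Algebra.IsIntegral R (R[X] ⧸ I) := ⟨hf.quotient_isIntegral hfI⟩
  have : Algebra.IsIntegral (R ⧸ I.comap (algebraMap R R[X])) (R[X] ⧸ I) :=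
    Algebra.IsIntegral.tower_top R
  rw [← algebraMap_eq]
  exact ringKrullDim_le_of_isIntegral Ideal.algebraMap_quotient_injective

lemma mem_map_C_iff_map_mk_eq_zero {K : Ideal R} {p : R[X]} :
    p ∈ K.map C ↔ p.map (Ideal.Quotient.mk K) = 0 := by
  simp only [Ideal.mem_map_C_iff, Polynomial.ext_iff, coeff_map, coeff_zero,
    Ideal.Quotient.eq_zero_iff_mem]

lemma isWeaklyRegular_map_C_append_singleton {rs : List R} (hrs : IsWeaklyRegular R rs)
    {f : R[X]} (hf : f.Monic) : IsWeaklyRegular R[X] (rs.map C ++ [f]) := by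
  rw [isWeaklyRegular_append_iff, isWeaklyRegular_singleton_iff]
  refine ⟨hrs.of_flat, (isSMulRegular_quotient_iff_mem_of_smul_mem _ _).2 fun p hp ↦ ?_⟩
  rw [smul_eq_mul, Ideal.mul_top, ← Ideal.map_ofList, mem_map_C_iff_map_mk_eq_zero] at hp ⊢
  rw [smul_eq_mul, Polynomial.map_mul] at hp
  exact (hf.map _).mul_right_eq_zero_iff.1 hp

lemma isWeaklyRegular_map_ringEquiv_iff (e : R ≃+* S) {rs : List R} :
    IsWeaklyRegular S (rs.map e) ↔ IsWeaklyRegular R rs :=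
  (e.toAddEquiv.isWeaklyRegular_congr (List.forall₂_map_right_iff.2
    (List.forall₂_same.2 fun r _ ↦ e.map_mul r))).symm

lemma ne_bot_of_ringKrullDim_quotient_le {k : Type*} [Field k] {N d : ℕ}
    {I : Ideal (MvPolynomial (Fin N) k)} (hd : ringKrullDim (MvPolynomial (Fin N) k ⧸ I) ≤ d)
    (hN : d < N) : I ≠ ⊥ := by
  rintro rfl
  rw [ringKrullDim_eq_of_ringEquiv (RingEquiv.quotientBot _),
    MvPolynomial.ringKrullDim_of_isNoetherianRing, ringKrullDim_eq_zero_of_field, zero_add,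
    Nat.card_fin] at hd
  exact hN.not_ge (by exact_mod_cast hd)

theorem exists_isWeaklyRegular_mem_of_ringKrullDim_quotient_le {k : Type*} [Field k]
    {N c d : ℕ} (I : Ideal (MvPolynomial (Fin N) k)) (hN : d + c ≤ N)
    (hd : ringKrullDim (MvPolynomial (Fin N) k ⧸ I) ≤ d) :
    ∃ rs : List (MvPolynomial (Fin N) k), rs.length = c ∧ (∀ r ∈ rs, r ∈ I) ∧
      IsWeaklyRegular (MvPolynomial (Fin N) k) rs := by
  induction N generalizing c with
  | zero => exact ⟨[], by simp; omega, by simp, .nil _ _⟩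
  | succ N ih =>
    cases c with
    | zero => exact ⟨[], rfl, by simp, .nil _ _⟩
    | succ c =>
      obtain ⟨f, hfI, hf⟩ := Submodule.exists_mem_ne_zero_of_ne_bot
        (ne_bot_of_ringKrullDim_quotient_le hd (by omega))
      obtain ⟨e, he⟩ := exists_ringEquiv_mvPolynomial_isUnit_leadingCoeff N hf
      set J := I.comap e.symm with hJ
      have hmonic : (he.unit⁻¹.val • e f).Monic := monic_of_isUnit_leadingCoeff_inv_smul he
      have hmem : he.unit⁻¹.val • e f ∈ J :=
        Submodule.smul_of_tower_mem J _ (by simpa [hJ] using hfI)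
      have hdim : ringKrullDim (MvPolynomial (Fin N) k ⧸ J.comap C) ≤ d :=
        calc _ ≤ _ := ringKrullDim_quotient_comap_C_le hmonic hmem
          _ = ringKrullDim (MvPolynomial (Fin (N + 1)) k ⧸ I) :=
            (ringKrullDim_eq_of_ringEquiv
              (Ideal.quotientEquiv I J e (Ideal.map_comap_of_equiv e).symm)).symm
          _ ≤ d := hd
      obtain ⟨rs, rfl, hrsJ, hrs⟩ := ih (c := c) (J.comap C) (by omega) hdim
      refine ⟨(rs.map C ++ [he.unit⁻¹.val • e f]).map e.symm, by simp, ?_,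
        (isWeaklyRegular_map_ringEquiv_iff e.symm).2
          (isWeaklyRegular_map_C_append_singleton hrs hmonic)⟩
      rw [List.forall_mem_map, List.forall_mem_append, List.forall_mem_map,
        List.forall_mem_singleton]
      exact ⟨hrsJ, hmem⟩

end PolynomialRegularSequence

theorem stmt17_general {R : Type*} [CommRing R] {s t : ℕ} (A : Matrix (Fin (s + 1)) (Fin t) R)
    {rs : List R} (hnil : rs ≠ []) (hrs : RingTheory.Sequence.IsWeaklyRegular R rs)
    (hmem : ∀ r ∈ rs, r ∈ maximalMinorIdeal A) (hlen : s + 1 < t + rs.length)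
    (π : ((Fin (s + 1) → R) ⧸ range A.toLin') →ₗ[R]
      ((Fin s → R) ⧸ range (A.submatrix Fin.castSucc _root_.id).toLin'))
    (hπ : π ∘ₗ (range A.toLin').mkQ =
      (range (A.submatrix Fin.castSucc _root_.id).toLin').mkQ ∘ₗ funLeft R R Fin.castSucc) :
    ∃ g₂ : (((Fin (s + 1) → R) ⧸ range A.toLin') →ₗ[R] R) →ₗ[R]
        maximalMinorIdeal (A.submatrix Fin.castSucc _root_.id),
      Function.Injective (lcomp R R π) ∧ Function.Exact (lcomp R R π) g₂ ∧
        Function.Surjective g₂ := by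
  have hsurj := surjective_of_comp_mkQ_eq hπ
  have hexact := exact_lcomp_of_exact_of_surjective (N := R)
    (exact_toSpanSingleton_of_comp_mkQ_eq hπ) hsurj
  refine ⟨(applyₗ ((range A.toLin').mkQ (Pi.single (Fin.last s) 1))).codRestrict _
    (apply_mkQ_single_mem_maximalMinorIdeal hnil hrs hmem hlen),
    lcomp_injective_of_surjective π hsurj, fun φ ↦ ?_, ?_⟩
  · rw [← hexact φ, Subtype.ext_iff, LinearMap.ext_ring_iff]
    simp
  · rintro ⟨x, hx⟩
    obtain ⟨φ, hφ⟩ := maximalMinorIdeal_le_range_applyₗ A hx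
    exact ⟨φ, Subtype.ext hφ⟩

/-- In the determinantal setup over `R = k[x_0,…,x_{n+c}]`, with
`φ_c : F → G_c` given by a `t × (t+c−1)` homogeneous matrix (transposed matrix `A`),
`φ_{c−1}` obtained by deleting the last column, `B_i = coker φ_i`, dualizing the exact
sequence `0 → R(a) → B_c → B_{c−1} → 0` yields a short exact sequence
`0 → Hom_R(B_{c−1}, R) → Hom_R(B_c, R) → I_{D_{c−1}}(−a) → 0` (twists suppressed), where
`I_{D_{c−1}}` is the determinantal ideal of maximal minors of the submatrix. -/
theorem stmt17 (k : Type) [Field k] (n c t s : ℕ) (hc : 2 ≤ c) (ht : 1 ≤ t)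
    (hs : s = t + c - 2)
    (A : Matrix (Fin (s + 1)) (Fin t) (MvPolynomial (Fin (n + c + 1)) k))
    (hinj : Function.Injective (Matrix.toLin' A))
    -- the determinantal ideal of `A` has codimension `c`,
    (hcodimc : ringKrullDim ((MvPolynomial (Fin (n + c + 1)) k) ⧸
        Ideal.span {d : MvPolynomial (Fin (n + c + 1)) k |
          ∃ g : Fin t → Fin (s + 1), Function.Injective g ∧
            d = (A.submatrix g _root_.id).det}) = (n + 1 : ℕ))
    -- and that of the submatrix with the last column deleted has codimension `c − 1`
    (hcodimcm1 : ringKrullDim ((MvPolynomial (Fin (n + c + 1)) k) ⧸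
        Ideal.span {d : MvPolynomial (Fin (n + c + 1)) k |
          ∃ g : Fin t → Fin s, Function.Injective g ∧
            d = ((A.submatrix Fin.castSucc _root_.id).submatrix g _root_.id).det}) = (n + 2 : ℕ))
    -- `π : B_c → B_{c−1}` induced by deleting the last coordinate
    (π : ((Fin (s + 1) → MvPolynomial (Fin (n + c + 1)) k) ⧸
        LinearMap.range (Matrix.toLin' A)) →ₗ[MvPolynomial (Fin (n + c + 1)) k]
      ((Fin s → MvPolynomial (Fin (n + c + 1)) k) ⧸
        LinearMap.range (Matrix.toLin' (A.submatrix Fin.castSucc _root_.id))))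
    (hπ : π.comp (LinearMap.range (Matrix.toLin' A)).mkQ =
      (LinearMap.range (Matrix.toLin' (A.submatrix Fin.castSucc _root_.id))).mkQ.comp
        (LinearMap.funLeft (MvPolynomial (Fin (n + c + 1)) k)
          (MvPolynomial (Fin (n + c + 1)) k) Fin.castSucc)) :
    ∃ g₂ : (((Fin (s + 1) → MvPolynomial (Fin (n + c + 1)) k) ⧸
          LinearMap.range (Matrix.toLin' A)) →ₗ[MvPolynomial (Fin (n + c + 1)) k]
          (MvPolynomial (Fin (n + c + 1)) k)) →ₗ[MvPolynomial (Fin (n + c + 1)) k]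
        (Ideal.span {d : MvPolynomial (Fin (n + c + 1)) k |
          ∃ g : Fin t → Fin s, Function.Injective g ∧
            d = ((A.submatrix Fin.castSucc _root_.id).submatrix g _root_.id).det}),
      Function.Injective
        (LinearMap.lcomp (MvPolynomial (Fin (n + c + 1)) k)
          (MvPolynomial (Fin (n + c + 1)) k) π) ∧
      Function.Exact
        (LinearMap.lcomp (MvPolynomial (Fin (n + c + 1)) k)
          (MvPolynomial (Fin (n + c + 1)) k) π) g₂ ∧
      Function.Surjective g₂ := by
  obtain ⟨rs, hlen, hmem, hrs⟩ :=
    exists_isWeaklyRegular_mem_of_ringKrullDim_quotient_le (c := c) _ (by omega) hcodimc.le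
  exact stmt17_general A (List.ne_nil_of_length_pos (by omega)) hrs hmem (by omega) π hπ
end
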